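/- Let φ : X → ℝ be a continuous potential on X = 𝒜^(ℤ^d) such that Σ_{n≥1} n^{d−1} var_n φ < ∞. Then φ does not have a freezing phase transition: there is no β_c ∈ ℝ such that ES(βφ) = ES(β′φ) for all β, β′ > β_c while ES(βφ) ≠ ES(β′φ) whenever β < β_c < β′. -/

import Mathlib

open MeasureTheory Filter Topology
open scoped ENNReal Classical

namespace Freezing

/-- The configuration space `X = 𝒜^(ℤ^d)`. -/
abbrev Cfg (d : ℕ) (A : Type) : Type := (Fin d → ℤ) → A

section Defs

variable {d : ℕ} {A : Type} [Fintype A] [TopologicalSpace A] [DiscreteTopology A]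
  [MeasurableSpace A] [BorelSpace A]

/-- The shift action: `(σ^n x)_m = x_{n+m}`. -/
def shift (n : Fin d → ℤ) (x : Cfg d A) : Cfg d A := fun m => x (n + m)

/-- Shift-invariance of a measure. -/
def Invariant (μ : Measure (Cfg d A)) : Prop :=
  ∀ n : Fin d → ℤ, Measure.map (shift n) μ = μ

/-- Cylinder set `[w]` for a pattern `w` on `E_n = ([0,n-1] ∩ ℤ)^d`. -/
def cylE (n : ℕ) (w : (Fin d → Fin n) → A) : Set (Cfg d A) :=
  { x | ∀ m : Fin d → Fin n, x (fun i => ((m i : ℕ) : ℤ)) = w m }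

/-- Measure-theoretic entropy `h(μ) = inf_{n ≥ 1} n^{-d} Σ_w (-μ[w] log μ[w])`. -/
noncomputable def entropy (μ : Measure (Cfg d A)) : ℝ :=
  ⨅ n : {n : ℕ // 1 ≤ n},
    ((n.1 : ℝ) ^ d)⁻¹ *
      ∑ w : (Fin d → Fin n.1) → A, Real.negMulLog (μ (cylE n.1 w)).toReal

/-- Pressure `p_φ(β) = sup { h(μ) + β ∫ φ dμ }` over shift-invariant probability measures. -/
noncomputable def pressure (φ : Cfg d A → ℝ) (β : ℝ) : ℝ :=
  sSup { r | ∃ μ : Measure (Cfg d A), IsProbabilityMeasure μ ∧ Invariant μ ∧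
    r = entropy μ + β * ∫ x, φ x ∂μ }

/-- The set of equilibrium states of `βφ`. -/
def ES (φ : Cfg d A → ℝ) (β : ℝ) : Set (Measure (Cfg d A)) :=
  { μ | IsProbabilityMeasure μ ∧ Invariant μ ∧
      entropy μ + β * ∫ x, φ x ∂μ = pressure φ β }

/-- `φ` has a freezing phase transition at `βc`. -/
def FreezingPT (φ : Cfg d A → ℝ) (βc : ℝ) : Prop :=
  (∀ β β' : ℝ, βc < β → βc < β' → ES φ β = ES φ β') ∧
  (∀ β β' : ℝ, β < βc → βc < β' → ES φ β ≠ ES φ β')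

/-- `s_φ = sup { ∫ φ dμ }` over shift-invariant probability measures. -/
noncomputable def sPhi (φ : Cfg d A → ℝ) : ℝ :=
  sSup { r | ∃ μ : Measure (Cfg d A), IsProbabilityMeasure μ ∧ Invariant μ ∧
    r = ∫ x, φ x ∂μ }

/-- The set of maximizing measures of `φ`. -/
def MM (φ : Cfg d A → ℝ) : Set (Measure (Cfg d A)) :=
  { μ | IsProbabilityMeasure μ ∧ Invariant μ ∧ (∫ x, φ x ∂μ) = sPhi φ }

/-- `h_φ = sup { h(η) : η ∈ MM(φ) }`. -/
noncomputable def hPhi (φ : Cfg d A → ℝ) : ℝ :=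
  sSup { r | ∃ μ ∈ MM φ, r = entropy μ }

/-- The zero-temperature accumulation points of `φ`. -/
def ZTA (φ : Cfg d A → ℝ) : Set (Measure (Cfg d A)) :=
  { μ | IsProbabilityMeasure μ ∧ Invariant μ ∧
      ∃ (β : ℕ → ℝ) (μs : ℕ → Measure (Cfg d A)),
        Tendsto β atTop atTop ∧ (∀ k, μs k ∈ ES φ (β k)) ∧
        ∀ f : Cfg d A → ℝ, Continuous f →
          Tendsto (fun k => ∫ x, f x ∂(μs k)) atTop (𝓝 (∫ x, f x ∂μ)) }

/-- A subshift: nonempty, closed, invariant under every shift. -/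
def IsSubshift (X₀ : Set (Cfg d A)) : Prop :=
  X₀.Nonempty ∧ IsClosed X₀ ∧ ∀ n : Fin d → ℤ, ∀ x ∈ X₀, shift n x ∈ X₀

/-- The language `L_{E_n}(X₀)`: patterns on `E_n` appearing at the origin of points of `X₀`. -/
def langE (X₀ : Set (Cfg d A)) (n : ℕ) : Set ((Fin d → Fin n) → A) :=
  { w | ∃ x ∈ X₀, ∀ m : Fin d → Fin n, x (fun i => ((m i : ℕ) : ℤ)) = w m }

/-- Topological entropy `h_top(X₀) = inf_{n ≥ 1} n^{-d} log |L_{E_n}(X₀)|`. -/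
noncomputable def topEnt (X₀ : Set (Cfg d A)) : ℝ :=
  ⨅ n : {n : ℕ // 1 ≤ n}, ((n.1 : ℝ) ^ d)⁻¹ * Real.log ((langE X₀ n.1).ncard)

/-- A measure of maximal entropy on the subshift `X₀`. -/
def IsMME (X₀ : Set (Cfg d A)) (μ : Measure (Cfg d A)) : Prop :=
  IsProbabilityMeasure μ ∧ Invariant μ ∧ μ X₀ = 1 ∧ entropy μ = topEnt X₀

/-- Ergodicity: invariant Borel sets have measure `0` or `1`. -/
def ErgodicInv (μ : Measure (Cfg d A)) : Prop :=
  ∀ s : Set (Cfg d A), MeasurableSet s → (∀ n : Fin d → ℤ, shift n ⁻¹' s = s) →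
    μ s = 0 ∨ μ s = 1

/-- The `n`-th variation `var_n φ`, over pairs agreeing on `B_n = ([-n,n] ∩ ℤ)^d`. -/
noncomputable def varPot (φ : Cfg d A → ℝ) (n : ℕ) : ℝ :=
  sSup { r | ∃ x y : Cfg d A,
    (∀ m : Fin d → ℤ, (∀ i, |m i| ≤ (n : ℤ)) → x m = y m) ∧ r = |φ x - φ y| }

/-- Sup-norm `‖m‖_∞` of a site `m ∈ ℤ^d`. -/
def supNorm (m : Fin d → ℤ) : ℕ := Finset.univ.sup fun i => (m i).natAbs

/-- The metric `dist(x,y) = 2^{-min{‖n‖_∞ : x_n ≠ y_n}}`. -/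
noncomputable def cfgDist (x y : Cfg d A) : ℝ :=
  if x = y then 0
  else (2 : ℝ) ^
    (-((sInf { k : ℕ | ∃ m : Fin d → ℤ, supNorm m = k ∧ x m ≠ y m } : ℕ) : ℤ))

/-- Distance from a point to a subshift. -/
noncomputable def distToSub (X₀ : Set (Cfg d A)) (x : Cfg d A) : ℝ :=
  sInf { r | ∃ y ∈ X₀, r = cfgDist x y }

end Defs

set_option linter.unusedSectionVars false

/-! ### Finite inequalities -/

theorem gibbs_pt {p q : ℝ} (hp : 0 ≤ p) (hq : 0 ≤ q) (h : 0 < p → 0 < q) :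
    Real.negMulLog p + p * Real.log q ≤ q - p := by
  rcases hp.eq_or_lt with rfl | hp'
  · simpa using hq
  · have hq' := h hp'
    have h1 := Real.log_le_sub_one_of_pos (div_pos hq' hp')
    rw [Real.log_div hq'.ne' hp'.ne'] at h1
    have h2 := mul_le_mul_of_nonneg_left h1 hp
    have h3 : p * (q / p - 1) = q - p := by field_simp
    rw [h3] at h2
    unfold Real.negMulLog
    linarith

theorem jensen_log {Ω : Type*} [Fintype Ω] (p g : Ω → ℝ) (hp : ∀ w, 0 ≤ p w)
    (h1 : ∑ w, p w = 1) :
    ∑ w, (Real.negMulLog (p w) + p w * g w) ≤ Real.log (∑ w, Real.exp (g w)) := by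
  have hne : (Finset.univ : Finset Ω).Nonempty := by
    by_contra h
    rw [Finset.not_nonempty_iff_eq_empty] at h
    rw [h] at h1
    simp at h1
  set Z := ∑ w, Real.exp (g w) with hZ
  have hZpos : 0 < Z := Finset.sum_pos (fun w _ => Real.exp_pos _) hne
  have key : ∀ w, Real.negMulLog (p w) + p w * g w - p w * Real.log Z
      ≤ Real.exp (g w) / Z - p w := by
    intro w
    have := gibbs_pt (hp w) (div_pos (Real.exp_pos (g w)) hZpos).le
      (fun _ => div_pos (Real.exp_pos (g w)) hZpos)
    rw [Real.log_div (Real.exp_pos _).ne' hZpos.ne', Real.log_exp] at this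
    linarith
  have h2 := Finset.sum_le_sum (fun w (_ : w ∈ Finset.univ) => key w)
  rw [Finset.sum_sub_distrib, Finset.sum_sub_distrib, ← Finset.sum_mul, ← Finset.sum_div, h1,
    ← hZ, div_self hZpos.ne'] at h2
  linarith

theorem gibbs_eq {Ω : Type*} [Fintype Ω] [Nonempty Ω] (g : Ω → ℝ) :
    ∑ w, (Real.negMulLog (Real.exp (g w) / ∑ w, Real.exp (g w)) +
      Real.exp (g w) / (∑ w, Real.exp (g w)) * g w) = Real.log (∑ w, Real.exp (g w)) := by
  set Z := ∑ w, Real.exp (g w) with hZ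
  have hZpos : 0 < Z := Finset.sum_pos (fun w _ => Real.exp_pos _) Finset.univ_nonempty
  have : ∀ w, Real.negMulLog (Real.exp (g w) / Z) + Real.exp (g w) / Z * g w
      = Real.exp (g w) / Z * Real.log Z := by
    intro w
    unfold Real.negMulLog
    rw [Real.log_div (Real.exp_pos _).ne' hZpos.ne', Real.log_exp]
    ring
  rw [Finset.sum_congr rfl (fun w _ => this w), ← Finset.sum_mul, ← Finset.sum_div, ← hZ,
    div_self hZpos.ne', one_mul]

theorem subadd {Ω I P : Type*} [Fintype Ω] [Fintype I] [Fintype P] (X : I → Ω → P)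
    (hX : ∀ ω ω', (∀ i, X i ω = X i ω') → ω = ω') (π : Ω → ℝ) (hπ : ∀ ω, 0 ≤ π ω)
    (h1 : ∑ ω, π ω = 1) :
    ∑ ω, Real.negMulLog (π ω) ≤
      ∑ i, ∑ p, Real.negMulLog (∑ ω, if X i ω = p then π ω else 0) := by
  set q : I → P → ℝ := fun i p => ∑ ω, if X i ω = p then π ω else 0 with hq
  have hq0 : ∀ i p, 0 ≤ q i p := fun i p => Finset.sum_nonneg fun ω _ => by
    split_ifs
    · exact hπ ω
    · exact le_rfl
  have hqpos : ∀ i ω, 0 < π ω → 0 < q i (X i ω) := by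
    intro i ω h
    refine lt_of_lt_of_le h ?_
    have := Finset.single_le_sum (f := fun ω' => if X i ω' = X i ω then π ω' else 0)
      (fun ω' _ => by
        split_ifs
        · exact hπ ω'
        · exact le_rfl) (Finset.mem_univ ω)
    simpa using this
  have hqsum : ∀ i, ∑ p, q i p = 1 := by
    intro i
    rw [hq]
    dsimp only
    rw [Finset.sum_comm]
    simpa using h1
  have hswap : ∀ i, ∑ p, Real.negMulLog (q i p) = ∑ ω, - (π ω * Real.log (q i (X i ω))) := by
    intro i
    have : ∀ p, Real.negMulLog (q i p) =
        ∑ ω, if X i ω = p then - (π ω * Real.log (q i p)) else 0 := by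
      intro p
      unfold Real.negMulLog
      conv_lhs => rw [neg_mul]; enter [1, 1]; rw [hq]
      rw [Finset.sum_mul, ← Finset.sum_neg_distrib]
      refine Finset.sum_congr rfl fun ω _ => ?_
      split_ifs <;> simp
    rw [Finset.sum_congr rfl fun p _ => this p, Finset.sum_comm]
    refine Finset.sum_congr rfl fun ω _ => ?_
    simp
  rw [Finset.sum_congr rfl fun i _ => hswap i, Finset.sum_comm]
  have key : ∀ ω, Real.negMulLog (π ω) - ∑ i, - (π ω * Real.log (q i (X i ω)))
      ≤ (∏ i, q i (X i ω)) - π ω := by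
    intro ω
    rw [Finset.sum_neg_distrib, sub_neg_eq_add, ← Finset.mul_sum]
    rcases (hπ ω).eq_or_lt with h | h
    · rw [← h]
      simpa using Finset.prod_nonneg fun i _ => hq0 i (X i ω)
    · rw [← Real.log_prod (fun i _ => (hqpos i ω h).ne')]
      exact gibbs_pt h.le (Finset.prod_nonneg fun i _ => hq0 i (X i ω))
        (fun _ => Finset.prod_pos fun i _ => hqpos i ω h)
  have h2 := Finset.sum_le_sum (fun w (_ : w ∈ Finset.univ) => key w)
  rw [Finset.sum_sub_distrib, Finset.sum_sub_distrib, h1] at h2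
  have h3 : ∑ ω, ∏ i, q i (X i ω) ≤ 1 := by
    have hinj : Function.Injective (fun ω => fun i => X i ω) :=
      fun ω ω' h => hX ω ω' fun i => congrFun h i
    calc ∑ ω, ∏ i, q i (X i ω)
        = ∑ f ∈ Finset.univ.image (fun ω => fun i => X i ω), ∏ i, q i (f i) := by
          rw [Finset.sum_image (fun a _ b _ h => hinj h)]
      _ ≤ ∑ f : I → P, ∏ i, q i (f i) :=
          Finset.sum_le_sum_of_subset_of_nonneg (Finset.subset_univ _)
            fun f _ _ => Finset.prod_nonneg fun i _ => hq0 i (f i)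
      _ = ∏ i, ∑ p, q i p := (Fintype.prod_sum _).symm
      _ = 1 := by simp [hqsum]
  linarith

theorem strictCS {P : Type*} [Fintype P] (a b c : P → ℝ) (ha : ∀ w, 0 < a w) (hb : ∀ w, 0 < b w)
    (hc : ∀ w, 0 ≤ c w) (u v : P) {τ κ r : ℝ} (hτ : 0 ≤ τ)
    (hr0 : 0 ≤ r) (hr1 : r ≤ 1)
    (hcab : ∀ w, c w ^ 2 ≤ τ * (a w * b w))
    (hκ : κ * ((∑ w, a w) * ∑ w, b w) ≤ a v * b u)
    (hr : a u * b v ≤ r ^ 2 * (a v * b u)) :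
    (∑ w, c w) ^ 2 ≤ τ * (1 - κ * (1 - r) ^ 2 / 2) * ((∑ w, a w) * ∑ w, b w) := by
  set α : P → ℝ := fun w => Real.sqrt (a w)
  set γ : P → ℝ := fun w => Real.sqrt (b w)
  have hα : ∀ w, α w ^ 2 = a w := fun w => Real.sq_sqrt (ha w).le
  have hγ : ∀ w, γ w ^ 2 = b w := fun w => Real.sq_sqrt (hb w).le
  have hα0 : ∀ w, 0 ≤ α w := fun w => Real.sqrt_nonneg _
  have hγ0 : ∀ w, 0 ≤ γ w := fun w => Real.sqrt_nonneg _
  have hc1 : ∀ w, c w ≤ Real.sqrt τ * (α w * γ w) := by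
    intro w
    apply le_of_sq_le_sq _ (mul_nonneg (Real.sqrt_nonneg _) (mul_nonneg (hα0 w) (hγ0 w)))
    rw [mul_pow, mul_pow, Real.sq_sqrt hτ, hα, hγ]
    exact hcab w
  have hc2 : (∑ w, c w) ^ 2 ≤ τ * (∑ w, α w * γ w) ^ 2 := by
    have h1 : ∑ w, c w ≤ Real.sqrt τ * ∑ w, α w * γ w := by
      rw [Finset.mul_sum]
      exact Finset.sum_le_sum fun w _ => hc1 w
    have h2 := pow_le_pow_left₀ (Finset.sum_nonneg fun w _ => hc w) h1 2
    rwa [mul_pow, Real.sq_sqrt hτ] at h2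
  have hL : ∑ w, ∑ w', (α w * γ w' - α w' * γ w) ^ 2
      = 2 * ((∑ w, a w) * ∑ w, b w) - 2 * (∑ w, α w * γ w) ^ 2 := by
    have : ∀ w w', (α w * γ w' - α w' * γ w) ^ 2
        = a w * b w' + b w * a w' - 2 * ((α w * γ w) * (α w' * γ w')) := by
      intro w w'
      rw [← hα, ← hα, ← hγ, ← hγ]
      ring
    simp_rw [this, Finset.sum_sub_distrib, Finset.sum_add_distrib, ← Finset.mul_sum,
      ← Finset.sum_mul]
    ring
  have hS : (α u * γ v - α v * γ u) ^ 2 ≤ ∑ w, ∑ w', (α w * γ w' - α w' * γ w) ^ 2 := by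
    refine le_trans ?_ (Finset.single_le_sum (f := fun w => ∑ w', (α w * γ w' - α w' * γ w) ^ 2)
      (fun w _ => Finset.sum_nonneg fun w' _ => sq_nonneg _) (Finset.mem_univ u))
    exact Finset.single_le_sum (f := fun w' => (α u * γ w' - α w' * γ u) ^ 2)
      (fun w _ => sq_nonneg _) (Finset.mem_univ v)
  have hr' : α u * γ v ≤ r * (α v * γ u) := by
    apply le_of_sq_le_sq _ (mul_nonneg hr0 (mul_nonneg (hα0 _) (hγ0 _)))
    rw [mul_pow, mul_pow, mul_pow, hα, hγ, hα, hγ]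
    exact hr
  have hgap : (1 - r) ^ 2 * (a v * b u) ≤ (α u * γ v - α v * γ u) ^ 2 := by
    have h1 : (1 - r) * (α v * γ u) ≤ α v * γ u - α u * γ v := by linarith
    have h2 := pow_le_pow_left₀ (mul_nonneg (by linarith) (mul_nonneg (hα0 _) (hγ0 _))) h1 2
    rw [mul_pow, mul_pow, hα, hγ] at h2
    nlinarith [h2]
  have h3 := mul_le_mul_of_nonneg_left hκ (sq_nonneg (1 - r))
  have h4 : (∑ w, α w * γ w) ^ 2 ≤ (1 - κ * (1 - r) ^ 2 / 2) * ((∑ w, a w) * ∑ w, b w) := by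
    nlinarith
  calc _ ≤ τ * (∑ w, α w * γ w) ^ 2 := hc2
    _ ≤ τ * ((1 - κ * (1 - r) ^ 2 / 2) * ((∑ w, a w) * ∑ w, b w)) :=
      mul_le_mul_of_nonneg_left h4 hτ
    _ = _ := by ring

section Blocks

variable {T K I B : Type} [Fintype T] [Fintype K] [Fintype I] [Fintype B]

/-- Iterated summation over the patterns in a list of blocks. -/
noncomputable def blk (e : I → K → T) : List I → ((T → B) → ℝ) → (T → B) → ℝ
  | [], f, z => f z
  | i :: l, f, z => ∑ w : K → B, blk e l f (Function.extend (e i) w z)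

theorem blk_pos (e : I → K → T) (l : List I) (f : (T → B) → ℝ) (hf : ∀ z, 0 < f z) (w₀ : K → B)
    (z : T → B) : 0 < blk e l f z := by
  induction l generalizing z with
  | nil => exact hf z
  | cons i l ih =>
    exact Finset.sum_pos (fun w _ => ih _) ⟨w₀, Finset.mem_univ _⟩

theorem extend_comm (e e' : K → T) (he : Function.Injective e) (he' : Function.Injective e')
    (hd : ∀ k k', e k ≠ e' k') (w w' : K → B) (z : T → B) :
    Function.extend e w (Function.extend e' w' z) =
      Function.extend e' w' (Function.extend e w z) := by
  funext t
  by_cases h : ∃ k, e k = t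
  · obtain ⟨k, rfl⟩ := h
    rw [he.extend_apply, Function.extend_apply' _ _ _ (by rintro ⟨k', h⟩; exact hd k k' h.symm),
      he.extend_apply]
  · rw [Function.extend_apply' _ _ _ h]
    by_cases h' : ∃ k, e' k = t
    · obtain ⟨k, rfl⟩ := h'
      rw [he'.extend_apply, he'.extend_apply]
    · rw [Function.extend_apply' _ _ _ h', Function.extend_apply' _ _ _ h',
        Function.extend_apply' _ _ _ h]

theorem blk_comp (e : I → K → T) (he : ∀ i, Function.Injective (e i))
    (hd : ∀ i j, i ≠ j → ∀ k k', e i k ≠ e j k') (l : List I) (f : (T → B) → ℝ) (j : I)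
    (hj : j ∉ l) (w w' : K → B) (c : ℝ)
    (hf : ∀ z, f (Function.extend (e j) w z) ≤ c * f (Function.extend (e j) w' z)) (z : T → B) :
    blk e l f (Function.extend (e j) w z) ≤ c * blk e l f (Function.extend (e j) w' z) := by
  induction l generalizing z with
  | nil => exact hf z
  | cons i l ih =>
    have hij : i ≠ j := fun h => hj (by simp [h])
    have hjl : j ∉ l := fun h => hj (by simp [h])
    simp only [blk]
    rw [Finset.mul_sum]
    refine Finset.sum_le_sum fun v _ => ?_
    rw [extend_comm _ _ (he i) (he j) (hd i j hij), extend_comm _ _ (he i) (he j) (hd i j hij)]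
    exact ih hjl _

theorem sum_extend (e : K → T) (he : Function.Injective e) (f : (T → B) → ℝ) :
    ∑ z : T → B, ∑ w : K → B, f (Function.extend e w z) =
      (Fintype.card (K → B) : ℝ) * ∑ z, f z := by
  have h1 : ∑ z : T → B, ∑ w : K → B, f (Function.extend e w z)
      = ∑ q : (T → B) × (K → B), f (Function.extend e q.2 q.1) := by
    rw [Fintype.sum_prod_type]
  have h2 : (Fintype.card (K → B) : ℝ) * ∑ z, f z = ∑ q : (T → B) × (K → B), f q.1 := by
    rw [Fintype.sum_prod_type]
    simp [Finset.mul_sum]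
  rw [h1, h2]
  have hinv : Function.Involutive (fun q : (T → B) × (K → B) =>
      (Function.extend e q.2 q.1, q.1 ∘ e)) := by
    rintro ⟨z, w⟩
    ext t
    · dsimp only
      by_cases h : ∃ k, e k = t
      · obtain ⟨k, rfl⟩ := h
        rw [he.extend_apply]; rfl
      · rw [Function.extend_apply' _ _ _ h, Function.extend_apply' _ _ _ h]
    · dsimp only
      simp [he.extend_apply]
  exact Fintype.sum_equiv hinv.toPerm _ _ (fun q => rfl)

theorem sum_blk (e : I → K → T) (he : ∀ i, Function.Injective (e i)) (l : List I)
    (f : (T → B) → ℝ) :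
    ∑ z, blk e l f z = (Fintype.card (K → B) : ℝ) ^ l.length * ∑ z, f z := by
  induction l with
  | nil => simp [blk]
  | cons i l ih =>
    simp only [blk]
    rw [sum_extend _ (he i), ih, List.length_cons, pow_succ]
    ring

theorem block_main (e : I → K → T) (he : ∀ i, Function.Injective (e i))
    (hd : ∀ i j, i ≠ j → ∀ k k', e i k ≠ e j k') (f₁ f₂ f₃ : (T → B) → ℝ)
    (h₁ : ∀ z, 0 < f₁ z) (h₂ : ∀ z, 0 < f₂ z) (h₃ : ∀ z, 0 < f₃ z)
    (h123 : ∀ z, f₂ z ^ 2 = f₁ z * f₃ z) (u v : K → B) (c r₁ r₃ r : ℝ) (hc : 1 ≤ c)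
    (hr0 : 0 ≤ r) (hr1 : r ≤ 1) (hr₁ : 0 ≤ r₁) (hr13 : r₁ * r₃ ≤ r ^ 2)
    (hc₁ : ∀ i w w' z, f₁ (Function.extend (e i) w z) ≤ c * f₁ (Function.extend (e i) w' z))
    (hc₃ : ∀ i w w' z, f₃ (Function.extend (e i) w z) ≤ c * f₃ (Function.extend (e i) w' z))
    (hu₁ : ∀ i z, f₁ (Function.extend (e i) u z) ≤ r₁ * f₁ (Function.extend (e i) v z))
    (hu₃ : ∀ i z, f₃ (Function.extend (e i) v z) ≤ r₃ * f₃ (Function.extend (e i) u z)) :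
    (∑ z, f₂ z) ^ 2 ≤
      (1 - ((Fintype.card (K → B) : ℝ) * c)⁻¹ ^ 2 * (1 - r) ^ 2 / 2) ^ (Fintype.card I) *
        ((∑ z, f₁ z) * ∑ z, f₃ z) := by
  set P : ℝ := (Fintype.card (K → B) : ℝ) with hP
  have hP1 : 1 ≤ P := by
    rw [hP]
    exact_mod_cast Fintype.card_pos_iff.mpr ⟨u⟩
  set κ : ℝ := (P * c)⁻¹ ^ 2 with hκ
  set θ : ℝ := 1 - κ * (1 - r) ^ 2 / 2 with hθ
  have hPc : 1 ≤ P * c := by nlinarith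
  have hκ0 : 0 ≤ κ := sq_nonneg _
  have hκ1 : κ ≤ 1 := by
    rw [hκ]
    exact pow_le_one₀ (by positivity) (inv_le_one_of_one_le₀ hPc)
  have hθ0 : 0 ≤ θ := by
    have : (1 - r) ^ 2 ≤ 1 := by nlinarith
    have : κ * (1 - r) ^ 2 ≤ 1 := by nlinarith [sq_nonneg (1 - r)]
    rw [hθ]; linarith
  have step : ∀ l : List I, l.Nodup → ∀ z, blk e l f₂ z ^ 2 ≤
      θ ^ l.length * (blk e l f₁ z * blk e l f₃ z) := by
    intro l
    induction l with
    | nil => intro _ z; simp [blk, h123]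
    | cons i l ih =>
      intro hl z
      have hil : i ∉ l := (List.nodup_cons.mp hl).1
      have ih' := ih (List.nodup_cons.mp hl).2
      have H := strictCS (fun w : K → B => blk e l f₁ (Function.extend (e i) w z))
        (fun w : K → B => blk e l f₃ (Function.extend (e i) w z))
        (fun w : K → B => blk e l f₂ (Function.extend (e i) w z))
        (fun w => blk_pos e l f₁ h₁ u _) (fun w => blk_pos e l f₃ h₃ u _)
        (fun w => (blk_pos e l f₂ h₂ u _).le) u v (τ := θ ^ l.length) (κ := κ) (r := r)
        (pow_nonneg hθ0 _) hr0 hr1 (fun w => ih' _) ?_ ?_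
      · simp only [blk, List.length_cons, pow_succ]
        exact H
      · have A1 : ∑ w : K → B, blk e l f₁ (Function.extend (e i) w z)
            ≤ P * c * blk e l f₁ (Function.extend (e i) v z) := by
          refine (Finset.sum_le_card_nsmul _ _ _ fun w _ =>
            blk_comp e he hd l f₁ i hil w v c (hc₁ i w v) z).trans ?_
          rw [nsmul_eq_mul, Finset.card_univ, ← hP]
          exact le_of_eq (by ring)
        have A3 : ∑ w : K → B, blk e l f₃ (Function.extend (e i) w z)
            ≤ P * c * blk e l f₃ (Function.extend (e i) u z) := by
          refine (Finset.sum_le_card_nsmul _ _ _ fun w _ =>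
            blk_comp e he hd l f₃ i hil w u c (hc₃ i w u) z).trans ?_
          rw [nsmul_eq_mul, Finset.card_univ, ← hP]
          exact le_of_eq (by ring)
        have A := mul_le_mul A1 A3 (Finset.sum_nonneg fun w _ => (blk_pos e l f₃ h₃ u _).le)
          (mul_nonneg (by linarith) (blk_pos e l f₁ h₁ u _).le)
        have A' := mul_le_mul_of_nonneg_left A hκ0
        refine A'.trans (le_of_eq ?_)
        rw [hκ]
        field_simp
      · have B1 := blk_comp e he hd l f₁ i hil u v r₁ (hu₁ i) z
        have B3 := blk_comp e he hd l f₃ i hil v u r₃ (hu₃ i) z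
        have p1 := blk_pos e l f₁ h₁ u (Function.extend (e i) v z)
        have p3 := blk_pos e l f₃ h₃ u (Function.extend (e i) u z)
        have p4 := blk_pos e l f₃ h₃ u (Function.extend (e i) v z)
        calc _ ≤ (r₁ * blk e l f₁ (Function.extend (e i) v z)) *
              (r₃ * blk e l f₃ (Function.extend (e i) u z)) :=
              mul_le_mul B1 B3 p4.le (mul_nonneg hr₁ p1.le)
          _ = (r₁ * r₃) * (blk e l f₁ (Function.extend (e i) v z) *
              blk e l f₃ (Function.extend (e i) u z)) := by ring
          _ ≤ _ := mul_le_mul_of_nonneg_right hr13 (mul_pos p1 p3).le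
  have hfin := step Finset.univ.toList (Finset.nodup_toList _)
  have hlen : (Finset.univ : Finset I).toList.length = Fintype.card I := by simp
  set l := (Finset.univ : Finset I).toList with hl
  rcases isEmpty_or_nonempty (T → B) with hE | ⟨⟨z₀⟩⟩
  · simp
  have H := strictCS (fun z => blk e l f₁ z) (fun z => blk e l f₃ z) (fun z => blk e l f₂ z)
    (fun w => blk_pos e l f₁ h₁ u _) (fun w => blk_pos e l f₃ h₃ u _)
    (fun w => (blk_pos e l f₂ h₂ u _).le) z₀ z₀ (τ := θ ^ l.length) (κ := 0) (r := 1)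
    (pow_nonneg hθ0 _) zero_le_one le_rfl hfin
    (by simpa using (mul_pos (blk_pos e l f₁ h₁ u _) (blk_pos e l f₃ h₃ u _)).le) (by simp)
  rw [sum_blk e he, sum_blk e he, sum_blk e he, hlen] at H
  have hpp : 0 < (P ^ Fintype.card I) ^ 2 := by positivity
  rw [← hP] at H
  refine le_of_mul_le_mul_left ?_ hpp
  calc _ = (P ^ Fintype.card I * ∑ z, f₂ z) ^ 2 := by ring
    _ ≤ _ := H
    _ = _ := by ring

end Blocks

/-! ### Variations and torus Hamiltonians -/

section Torus

variable {d : ℕ} {A : Type} [Fintype A] [TopologicalSpace A] [DiscreteTopology A]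
  [MeasurableSpace A] [BorelSpace A]

theorem supNorm_le {m : Fin d → ℤ} {n : ℕ} : supNorm m ≤ n ↔ ∀ i, (m i).natAbs ≤ n := by
  simp [supNorm]

theorem natAbs_le_supNorm (m : Fin d → ℤ) (i : Fin d) : (m i).natAbs ≤ supNorm m :=
  supNorm_le.mp le_rfl i

/-- Oscillation over pairs agreeing on `‖m‖ < n`. -/
noncomputable def osc (φ : Cfg d A → ℝ) (n : ℕ) : ℝ :=
  sSup { r | ∃ x y : Cfg d A, (∀ m, supNorm m < n → x m = y m) ∧ r = |φ x - φ y| }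

theorem osc_nonneg (φ : Cfg d A → ℝ) (n : ℕ) : 0 ≤ osc φ n := by
  apply Real.sSup_nonneg
  rintro r ⟨x, y, -, rfl⟩
  exact abs_nonneg _

theorem exists_bound (φ : Cfg d A → ℝ) (hφ : Continuous φ) : ∃ C, ∀ x, |φ x| ≤ C := by
  obtain ⟨C, hC⟩ := (isCompact_range hφ).isBounded.exists_norm_le
  exact ⟨C, fun x => hC _ ⟨x, rfl⟩⟩

theorem le_osc (φ : Cfg d A → ℝ) (hφ : Continuous φ) {n : ℕ} {x y : Cfg d A}
    (h : ∀ m, supNorm m < n → x m = y m) : |φ x - φ y| ≤ osc φ n := by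
  obtain ⟨C, hC⟩ := exists_bound φ hφ
  apply le_csSup
  · refine ⟨C + C, ?_⟩
    rintro r ⟨x, y, -, rfl⟩
    exact (abs_sub _ _).trans (add_le_add (hC x) (hC y))
  · exact ⟨x, y, h, rfl⟩

theorem osc_succ (φ : Cfg d A → ℝ) (n : ℕ) : osc φ (n + 1) = varPot φ n := by
  unfold osc varPot
  have : ∀ m : Fin d → ℤ, supNorm m < n + 1 ↔ ∀ i, |m i| ≤ (n : ℤ) := by
    intro m
    rw [Nat.lt_succ_iff, supNorm_le]
    refine forall_congr' fun i => ?_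
    rw [abs_le]
    omega
  simp only [this]

/-- The summability hypothesis. -/
def SumVar (d : ℕ) {A : Type} (φ : Cfg d A → ℝ) : Prop :=
  Summable fun n : ℕ => ((n + 1 : ℕ) : ℝ) ^ (d - 1) * varPot φ (n + 1)

theorem osc_tendsto (φ : Cfg d A → ℝ) (hs : SumVar d φ) : Tendsto (osc φ) atTop (𝓝 0) := by
  rw [← tendsto_add_atTop_iff_nat 2]
  refine squeeze_zero (fun n => osc_nonneg φ _) (fun n => ?_) hs.tendsto_atTop_zero
  rw [osc_succ φ (n + 1)]
  refine le_mul_of_one_le_left ?_ (one_le_pow₀ (by push_cast; linarith [n.cast_nonneg (α := ℝ)]))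
  rw [← osc_succ]
  exact osc_nonneg φ _

theorem pow_diff (e : ℕ) {a b : ℝ} (hb : 0 ≤ b) (hab : b ≤ a) :
    a ^ (e + 1) - b ^ (e + 1) ≤ (e + 1) * (a - b) * a ^ e := by
  induction e with
  | zero => simp
  | succ e ih =>
    have h1 : b ^ (e + 1) ≤ a ^ (e + 1) := pow_le_pow_left₀ hb hab _
    have h2 := mul_le_mul_of_nonneg_left ih (hb.trans hab)
    have h3 := mul_le_mul_of_nonneg_right h1 (sub_nonneg.mpr hab)
    push_cast
    calc a ^ (e + 1 + 1) - b ^ (e + 1 + 1)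
        = a * (a ^ (e + 1) - b ^ (e + 1)) + b ^ (e + 1) * (a - b) := by ring
      _ ≤ a * ((e + 1) * (a - b) * a ^ e) + a ^ (e + 1) * (a - b) := add_le_add h2 h3
      _ = _ := by ring

theorem card_shell (hd : 1 ≤ d) (s : Finset (Fin d → ℤ)) (n : ℕ) :
    ((s.filter fun k => supNorm k = n).card : ℝ) ≤ 2 * d * (2 * n + 1) ^ (d - 1) := by
  obtain ⟨e, rfl⟩ : ∃ e, d = e + 1 := ⟨d - 1, by omega⟩
  set big : Finset (Fin (e + 1) → ℤ) := Fintype.piFinset fun _ => Finset.Icc (-(n : ℤ)) n with hbig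
  have cbig : big.card = (2 * n + 1) ^ (e + 1) := by
    rw [hbig, Fintype.card_piFinset]
    simp only [Int.card_Icc, Finset.prod_const, Finset.card_univ, Fintype.card_fin]
    congr 1
    omega
  have mbig : ∀ k : Fin (e + 1) → ℤ, supNorm k ≤ n → k ∈ big := by
    intro k hk
    rw [hbig, Fintype.mem_piFinset]
    intro i
    have := supNorm_le.mp hk i
    rw [Finset.mem_Icc]
    omega
  rcases Nat.eq_zero_or_pos n with rfl | hn
  · have : (s.filter fun k => supNorm k = 0).card ≤ 1 := by
      calc _ ≤ big.card := Finset.card_le_card fun k hk =>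
            mbig k (Finset.mem_filter.mp hk).2.le
        _ = 1 := by rw [cbig]; simp
    have h' : ((s.filter fun k => supNorm k = 0).card : ℝ) ≤ 1 := by exact_mod_cast this
    push_cast
    simp only [mul_zero, zero_add, one_pow]
    have : (0 : ℝ) ≤ e := e.cast_nonneg
    linarith
  · set small : Finset (Fin (e + 1) → ℤ) :=
      Fintype.piFinset fun _ => Finset.Icc (-(n : ℤ) + 1) (n - 1) with hsmall
    have csmall : small.card = (2 * n - 1) ^ (e + 1) := by
      rw [hsmall, Fintype.card_piFinset]
      simp only [Int.card_Icc, Finset.prod_const, Finset.card_univ, Fintype.card_fin]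
      congr 1
      omega
    have hsub : small ⊆ big := by
      intro k hk
      rw [hsmall, Fintype.mem_piFinset] at hk
      rw [hbig, Fintype.mem_piFinset]
      intro i
      have := Finset.mem_Icc.mp (hk i)
      rw [Finset.mem_Icc]
      omega
    have h1 : (s.filter fun k => supNorm k = n) ⊆ big \ small := by
      intro k hk
      have hk' := (Finset.mem_filter.mp hk).2
      rw [Finset.mem_sdiff]
      refine ⟨mbig k hk'.le, fun h => ?_⟩
      rw [hsmall, Fintype.mem_piFinset] at h
      have : supNorm k ≤ n - 1 := by
        rw [supNorm_le]
        intro i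
        have := Finset.mem_Icc.mp (h i)
        omega
      omega
    have h2 : ((s.filter fun k => supNorm k = n).card : ℝ) ≤ (2 * n + 1 : ℝ) ^ (e + 1)
        - (2 * n - 1 : ℝ) ^ (e + 1) := by
      have := Finset.card_le_card h1
      rw [Finset.card_sdiff_of_subset hsub] at this
      have h3 : ((s.filter fun k => supNorm k = n).card : ℝ) ≤ ((big.card - small.card : ℕ) : ℝ) := by
        exact_mod_cast this
      rw [Nat.cast_sub (Finset.card_le_card hsub), cbig, csmall] at h3
      push_cast [Nat.cast_sub (show 1 ≤ 2 * n by omega)] at h3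
      exact h3
    have h4 := pow_diff e (a := 2 * n + 1) (b := 2 * n - 1)
      (by have : (1 : ℝ) ≤ n := by exact_mod_cast hn
          linarith) (by linarith)
    push_cast
    refine h2.trans (h4.trans (le_of_eq ?_))
    ring

theorem W_summable (hd : 1 ≤ d) (φ : Cfg d A → ℝ) (hs : SumVar d φ) (R : ℕ) :
    Summable fun k : Fin d → ℤ => osc φ (supNorm k - R) := by
  have h1 : Summable fun n : ℕ => (2 * d * (2 * n + 1) ^ (d - 1) : ℝ) * osc φ (n - R) := by
    rw [← summable_nat_add_iff (R + 2)]
    refine Summable.of_nonneg_of_le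
      (fun n => mul_nonneg (by positivity) (osc_nonneg φ _)) (fun n => ?_)
      (hs.mul_left (2 * d * (2 * R + 5) ^ (d - 1) : ℝ))
    have hh : n + (R + 2) - R = n + 1 + 1 := by omega
    rw [hh, osc_succ φ (n + 1), ← mul_assoc]
    refine mul_le_mul_of_nonneg_right ?_ (by rw [← osc_succ]; exact osc_nonneg φ _)
    rw [mul_assoc (2 * (d : ℝ)), ← mul_pow]
    refine mul_le_mul_of_nonneg_left (pow_le_pow_left₀ (by positivity) ?_ _) (by positivity)
    push_cast
    have : (0 : ℝ) ≤ n := n.cast_nonneg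
    have : (0 : ℝ) ≤ R := R.cast_nonneg
    nlinarith
  refine summable_of_sum_le (fun k => osc_nonneg φ _)
    (c := ∑' n : ℕ, (2 * d * (2 * n + 1) ^ (d - 1) : ℝ) * osc φ (n - R)) fun s => ?_
  rw [Finset.sum_comp (fun n => osc φ (n - R)) supNorm]
  refine le_trans (Finset.sum_le_sum fun n _ => ?_)
    (h1.sum_le_tsum _ fun n _ => mul_nonneg (by positivity) (osc_nonneg φ _))
  rw [nsmul_eq_mul]
  exact mul_le_mul_of_nonneg_right (card_shell hd s n) (osc_nonneg φ _)

/-- The discrete torus. -/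
abbrev Tor (d N : ℕ) : Type := Fin d → ZMod N

/-- Reduction mod `N`. -/
def toT (N : ℕ) (m : Fin d → ℤ) : Tor d N := fun i => (m i : ZMod N)

/-- Periodic extension. -/
def per (N : ℕ) (w : Tor d N → A) : Cfg d A := fun m => w (toT N m)

/-- Torus translation. -/
def trans {N : ℕ} (t : Tor d N) (w : Tor d N → A) : Tor d N → A := fun s => w (t + s)

theorem toT_add (N : ℕ) (m n : Fin d → ℤ) : toT N (m + n) = toT N m + toT N n := by
  funext i; simp [toT]

theorem per_trans (N : ℕ) (k : Fin d → ℤ) (w : Tor d N → A) :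
    per N (trans (toT N k) w) = shift k (per N w) := by
  funext m
  simp [per, trans, shift, toT_add]

theorem shift_shift (k l : Fin d → ℤ) (x : Cfg d A) :
    shift k (shift l x) = shift (l + k) x := by
  funext m
  simp [shift, add_assoc]

/-- Centered representative. -/
def cen {N : ℕ} (t : Tor d N) : Fin d → ℤ := fun i => (t i).valMinAbs

theorem toT_cen {N : ℕ} (t : Tor d N) : toT N (cen t) = t := by
  funext i; simp [toT, cen]

theorem cen_inj {N : ℕ} : Function.Injective (cen : Tor d N → Fin d → ℤ) := fun s t h => by
  rw [← toT_cen s, h, toT_cen]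

theorem cen_le {N : ℕ} [NeZero N] (t : Tor d N) : supNorm (cen t) ≤ N / 2 :=
  supNorm_le.mpr fun _ => ZMod.natAbs_valMinAbs_le _

theorem cen_toT {N : ℕ} [NeZero N] (k : Fin d → ℤ) (hk : 2 * supNorm k < N) :
    cen (toT N k) = k := by
  funext i
  have := natAbs_le_supNorm k i
  unfold cen toT
  rw [ZMod.valMinAbs_spec]
  refine ⟨rfl, ?_⟩
  rw [Set.mem_Ioc]
  omega

/-- The torus Hamiltonian. -/
noncomputable def Ham (φ : Cfg d A → ℝ) (N : ℕ) [NeZero N] (w : Tor d N → A) : ℝ :=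
  ∑ t : Tor d N, φ (per N (trans t w))

theorem trans_trans {N : ℕ} (s t : Tor d N) (w : Tor d N → A) :
    trans s (trans t w) = trans (t + s) w := by
  funext r; simp [trans, add_assoc]

theorem Ham_trans (φ : Cfg d A → ℝ) (N : ℕ) [NeZero N] (s : Tor d N) (w : Tor d N → A) :
    Ham φ N (trans s w) = Ham φ N w := by
  unfold Ham
  simp_rw [trans_trans]
  exact Fintype.sum_equiv (Equiv.addLeft s) _ _ (fun t => rfl)

/-- The torus configurations differ only on the image of the box of radius `R`. -/
def DiffOn (R N : ℕ) (x y : Tor d N → A) : Prop :=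
  ∀ t, x t ≠ y t → ∃ b : Fin d → ℤ, supNorm b ≤ R ∧ toT N b = t

theorem term_le (φ : Cfg d A → ℝ) (hφ : Continuous φ) {R N : ℕ} [NeZero N] {x y : Tor d N → A}
    (h : DiffOn R N x y) (t : Tor d N) :
    |φ (per N (trans t x)) - φ (per N (trans t y))| ≤ osc φ (supNorm (cen t) - R) := by
  apply le_osc φ hφ
  intro m hm
  by_contra hne
  obtain ⟨b, hb, hbt⟩ := h (t + toT N m) hne
  have hcl := cen_le t
  have hNpos : 0 < N := Nat.pos_of_ne_zero (NeZero.ne N)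
  have hEq : b = cen t + m := by
    funext i
    have h1 := congrFun hbt i
    have h2 : ((b i : ℤ) : ZMod N) = ((cen t i + m i : ℤ) : ZMod N) := by
      have h3 := congrFun (toT_cen t) i
      simp only [toT, Pi.add_apply] at h1 h3
      rw [h1]
      push_cast
      rw [h3]
    rw [ZMod.intCast_eq_intCast_iff_dvd_sub] at h2
    have h4 : |cen t i + m i - b i| < N := by
      have a1 := natAbs_le_supNorm (cen t) i
      have a2 := natAbs_le_supNorm m i
      have a3 := natAbs_le_supNorm b i
      rw [abs_lt]
      omega
    have h5 := Int.eq_zero_of_abs_lt_dvd h2 h4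
    simp only [Pi.add_apply]
    omega
  have hle : supNorm (cen t) ≤ supNorm b + supNorm m := by
    rw [supNorm_le]
    intro i
    have e := congrFun hEq i
    have a2 := natAbs_le_supNorm m i
    have a3 := natAbs_le_supNorm b i
    simp only [Pi.add_apply] at e
    omega
  omega

theorem Ham_diff_le (hd : 1 ≤ d) (φ : Cfg d A → ℝ) (hφ : Continuous φ) (hs : SumVar d φ)
    {R N : ℕ} [NeZero N] {x y : Tor d N → A} (h : DiffOn R N x y) :
    |Ham φ N x - Ham φ N y| ≤ ∑' k : Fin d → ℤ, osc φ (supNorm k - R) := by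
  unfold Ham
  rw [← Finset.sum_sub_distrib]
  refine (Finset.abs_sum_le_sum_abs _ _).trans ((Finset.sum_le_sum fun t _ => term_le φ hφ h t).trans ?_)
  have := (W_summable hd φ hs R).sum_le_tsum (Finset.univ.image (cen : Tor d N → Fin d → ℤ))
    (fun k _ => osc_nonneg φ _)
  rwa [Finset.sum_image (fun a _ b _ h => cen_inj h)] at this

/-- The relative energy of two asymptotic configurations. -/
noncomputable def relE (φ : Cfg d A → ℝ) (x y : Cfg d A) : ℝ :=
  ∑' k : Fin d → ℤ, (φ (shift k x) - φ (shift k y))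

theorem term_le' (φ : Cfg d A → ℝ) (hφ : Continuous φ) {R : ℕ} {x y : Cfg d A}
    (h : ∀ m, R < supNorm m → x m = y m) (k : Fin d → ℤ) :
    |φ (shift k x) - φ (shift k y)| ≤ osc φ (supNorm k - R) := by
  apply le_osc φ hφ
  intro m hm
  apply h
  have hle : supNorm k ≤ supNorm (k + m) + supNorm m := by
    rw [supNorm_le]
    intro i
    have a2 := natAbs_le_supNorm m i
    have a3 := natAbs_le_supNorm (k + m) i
    simp only [Pi.add_apply] at a3
    omega
  omega

theorem relE_summable (hd : 1 ≤ d) (φ : Cfg d A → ℝ) (hφ : Continuous φ) (hs : SumVar d φ)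
    {R : ℕ} {x y : Cfg d A} (h : ∀ m, R < supNorm m → x m = y m) :
    Summable fun k : Fin d → ℤ => (φ (shift k x) - φ (shift k y)) :=
  Summable.of_norm_bounded (W_summable hd φ hs R) fun k => term_le' φ hφ h k

theorem approx (hd : 1 ≤ d) (φ : Cfg d A → ℝ) (hφ : Continuous φ) (hs : SumVar d φ)
    (R : ℕ) (ε : ℝ) (hε : 0 < ε) : ∃ L : ℕ, ∀ (N : ℕ) [NeZero N], L ≤ N → ∀ x y : Cfg d A,
      (∀ m, R < supNorm m → x m = y m) → ∀ x' y' : Tor d N → A, DiffOn R N x' y' →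
      (∀ m, supNorm m ≤ L → per N x' m = x m) → (∀ m, supNorm m ≤ L → per N y' m = y m) →
      |Ham φ N x' - Ham φ N y' - relE φ x y| ≤ ε := by
  have hW := W_summable hd φ hs R
  obtain ⟨s, hs'⟩ := summable_iff_vanishing_norm.mp hW (ε / 4) (by linarith)
  set M := s.sup supNorm with hM
  have hsM : ∀ k ∈ s, supNorm k ≤ M := fun k hk => Finset.le_sup (f := supNorm) hk
  have ho := ((osc_tendsto φ hs).const_mul ((s.card : ℝ) * 2))
  rw [mul_zero] at ho
  obtain ⟨L₀, hL₀⟩ := eventually_atTop.mp (ho.eventually_lt_const (show (0 : ℝ) < ε / 4 by linarith))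
  refine ⟨L₀ + 2 * M + 1, ?_⟩
  intro N _ hN x y hxy x' y' hD hx' hy'
  have tail : ∀ t : Finset (Fin d → ℤ), Disjoint t s →
      ∑ k ∈ t, osc φ (supNorm k - R) ≤ ε / 4 := fun t ht =>
    (le_abs_self _).trans (hs' t ht).le
  -- the limiting energy
  have hrel : |relE φ x y - ∑ k ∈ s, (φ (shift k x) - φ (shift k y))| ≤ ε / 4 := by
    have hS := (relE_summable hd φ hφ hs hxy)
    have h1 : Tendsto (fun t : Finset (Fin d → ℤ) => |∑ k ∈ t, (φ (shift k x) - φ (shift k y))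
        - ∑ k ∈ s, (φ (shift k x) - φ (shift k y))|) atTop
        (𝓝 |relE φ x y - ∑ k ∈ s, (φ (shift k x) - φ (shift k y))|) :=
      ((hS.hasSum.sub_const _).abs)
    refine le_of_tendsto h1 (eventually_atTop.mpr ⟨s, fun t ht => ?_⟩)
    rw [← Finset.sum_sdiff (show s ⊆ t from ht), add_sub_cancel_right]
    exact (Finset.abs_sum_le_sum_abs _ _).trans
      ((Finset.sum_le_sum fun k _ => term_le' φ hφ hxy k).trans (tail _ Finset.sdiff_disjoint))
  -- the torus energy
  set J : Finset (Fin d → ℤ) := Finset.univ.image (cen : Tor d N → Fin d → ℤ) with hJ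
  have hH : Ham φ N x' - Ham φ N y' =
      ∑ k ∈ J, (φ (shift k (per N x')) - φ (shift k (per N y'))) := by
    rw [hJ, Finset.sum_image (fun a _ b _ h => cen_inj h)]
    unfold Ham
    rw [← Finset.sum_sub_distrib]
    refine Finset.sum_congr rfl fun t _ => ?_
    rw [← per_trans, ← per_trans, toT_cen]
  have hsJ : s ⊆ J := by
    intro k hk
    rw [hJ, Finset.mem_image]
    refine ⟨toT N k, Finset.mem_univ _, cen_toT k ?_⟩
    have := hsM k hk
    omega
  have h2 : |∑ k ∈ J \ s, (φ (shift k (per N x')) - φ (shift k (per N y')))| ≤ ε / 4 := by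
    refine (Finset.abs_sum_le_sum_abs _ _).trans
      ((Finset.sum_le_sum fun k hk => ?_).trans (tail _ Finset.sdiff_disjoint))
    obtain ⟨t, -, rfl⟩ := Finset.mem_image.mp (Finset.mem_sdiff.mp hk).1
    have := term_le φ hφ hD t
    rwa [← per_trans, ← per_trans, toT_cen]
  have near : ∀ (z : Cfg d A) (z' : Tor d N → A),
      (∀ m, supNorm m ≤ L₀ + 2 * M + 1 → per N z' m = z m) → ∀ k ∈ s,
      |φ (shift k (per N z')) - φ (shift k z)| ≤ osc φ (L₀ + M) := by
    intro z z' hz k hk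
    apply le_osc φ hφ
    intro m hm
    apply hz
    have := hsM k hk
    rw [supNorm_le]
    intro i
    have a1 := natAbs_le_supNorm k i
    have a2 := natAbs_le_supNorm m i
    simp only [Pi.add_apply]
    omega
  have h3 : |∑ k ∈ s, (φ (shift k (per N x')) - φ (shift k (per N y'))) -
      ∑ k ∈ s, (φ (shift k x) - φ (shift k y))| ≤ ε / 4 := by
    rw [← Finset.sum_sub_distrib]
    refine (Finset.abs_sum_le_sum_abs _ _).trans ?_
    refine (Finset.sum_le_card_nsmul _ _ (2 * osc φ (L₀ + M)) fun k hk => ?_).trans ?_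
    · have b1 := near x x' hx' k hk
      have b2 := near y y' hy' k hk
      rw [abs_le] at *
      constructor <;> linarith [b1.1, b1.2, b2.1, b2.2]
    · rw [nsmul_eq_mul, ← mul_assoc]
      exact (hL₀ (L₀ + M) (by omega)).le
  rw [hH, ← Finset.sum_sdiff hsJ]
  rw [abs_le] at *
  constructor <;> linarith [hrel.1, hrel.2, h2.1, h2.2, h3.1, h3.2]

end Torus

/-! ### Tilings, torus Gibbs weights and measures -/

section GibbsTorus

variable {d : ℕ} {A : Type} [Fintype A] [TopologicalSpace A] [DiscreteTopology A]
  [MeasurableSpace A] [BorelSpace A]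

/-- A natural vector as an integer vector. -/
def natV {m : ℕ} (k : Fin d → Fin m) : Fin d → ℤ := fun j => ((k j : ℕ) : ℤ)

/-- The corner of a tile. -/
def corner (m : ℕ) {M : ℕ} (i : Fin d → Fin M) : Fin d → ℤ := fun j => (m : ℤ) * ((i j : ℕ) : ℤ)

/-- The tiles of the torus. -/
def tile (N m : ℕ) {M : ℕ} (i : Fin d → Fin M) (k : Fin d → Fin m) : Tor d N :=
  toT N (corner m i + natV k)

theorem tile_inj {N m M : ℕ} (hN : m * M = N) {i i' : Fin d → Fin M} {k k' : Fin d → Fin m}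
    (h : tile N m i k = tile N m i' k') : i = i' ∧ k = k' := by
  have key : ∀ j, i j = i' j ∧ k j = k' j := by
    intro j
    have h1 := congrFun h j
    simp only [tile, toT, corner, natV, Pi.add_apply] at h1
    have h2 : ((m * (i j : ℕ) + (k j : ℕ) : ℕ) : ZMod N) =
        ((m * (i' j : ℕ) + (k' j : ℕ) : ℕ) : ZMod N) := by
      push_cast at h1 ⊢
      exact h1
    have lt : ∀ (a : Fin M) (b : Fin m), m * (a : ℕ) + (b : ℕ) < N := by
      intro a b
      rw [← hN]
      have := Nat.mul_le_mul_left m (show (a : ℕ) + 1 ≤ M from a.2)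
      have := b.2
      rw [mul_add] at *
      omega
    rw [ZMod.natCast_eq_natCast_iff', Nat.mod_eq_of_lt (lt _ _), Nat.mod_eq_of_lt (lt _ _)] at h2
    have hm : 0 < m := lt_of_le_of_lt (Nat.zero_le _) (k j).2
    have q := congrArg (· / m) h2
    have r := congrArg (· % m) h2
    simp only [Nat.mul_add_div hm, Nat.div_eq_of_lt (k j).2, Nat.div_eq_of_lt (k' j).2,
      Nat.mul_add_mod, Nat.mod_eq_of_lt (k j).2, Nat.mod_eq_of_lt (k' j).2, add_zero] at q r
    exact ⟨Fin.ext q, Fin.ext r⟩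
  exact ⟨funext fun j => (key j).1, funext fun j => (key j).2⟩

theorem tile_surj {N m M : ℕ} [NeZero N] (hN : m * M = N) (t : Tor d N) :
    ∃ (i : Fin d → Fin M) (k : Fin d → Fin m), tile N m i k = t := by
  have hNpos : 0 < N := Nat.pos_of_ne_zero (NeZero.ne N)
  have hm : 0 < m := Nat.pos_of_ne_zero (by rintro rfl; simp at hN; omega)
  refine ⟨fun j => ⟨(t j).val / m, ?_⟩, fun j => ⟨(t j).val % m, Nat.mod_lt _ hm⟩, ?_⟩
  · rw [Nat.div_lt_iff_lt_mul hm, mul_comm, hN]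
    exact ZMod.val_lt _
  · funext j
    simp only [tile, toT, corner, natV, Pi.add_apply]
    have : ((m * ((t j).val / m) + (t j).val % m : ℕ) : ZMod N) = t j := by
      rw [Nat.div_add_mod]
      simp
    push_cast at this
    simp only [Int.cast_add, Int.cast_mul, Int.cast_natCast]
    exact this

/-- Translation as a permutation. -/
def transE {N : ℕ} (t : Tor d N) : (Tor d N → A) ≃ (Tor d N → A) where
  toFun := trans t
  invFun := trans (-t)
  left_inv w := by rw [trans_trans]; funext s; simp [trans]
  right_inv w := by rw [trans_trans]; funext s; simp [trans]

theorem transE_apply {N : ℕ} (t : Tor d N) (w : Tor d N → A) : transE t w = trans t w := rfl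

/-- Partition function. -/
noncomputable def ZN (φ : Cfg d A → ℝ) (β : ℝ) (N : ℕ) [NeZero N] : ℝ :=
  ∑ w : Tor d N → A, Real.exp (β * Ham φ N w)

/-- Gibbs weights. -/
noncomputable def gw (φ : Cfg d A → ℝ) (β : ℝ) (N : ℕ) [NeZero N] (w : Tor d N → A) : ℝ :=
  Real.exp (β * Ham φ N w) / ZN φ β N

theorem ZN_pos [Nonempty A] (φ : Cfg d A → ℝ) (β : ℝ) (N : ℕ) [NeZero N] : 0 < ZN φ β N :=
  Finset.sum_pos (fun _ _ => Real.exp_pos _) Finset.univ_nonempty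

theorem gw_nonneg [Nonempty A] (φ : Cfg d A → ℝ) (β : ℝ) (N : ℕ) [NeZero N] (w : Tor d N → A) :
    0 ≤ gw φ β N w := (div_pos (Real.exp_pos _) (ZN_pos φ β N)).le

theorem gw_sum [Nonempty A] (φ : Cfg d A → ℝ) (β : ℝ) (N : ℕ) [NeZero N] :
    ∑ w, gw φ β N w = 1 := by
  unfold gw
  rw [← Finset.sum_div]
  exact div_self (ZN_pos φ β N).ne'

theorem gw_trans (φ : Cfg d A → ℝ) (β : ℝ) (N : ℕ) [NeZero N] (t : Tor d N) (w : Tor d N → A) :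
    gw φ β N (trans t w) = gw φ β N w := by
  unfold gw; rw [Ham_trans]

/-- The periodic Gibbs measure. -/
noncomputable def nu (φ : Cfg d A → ℝ) (β : ℝ) (N : ℕ) [NeZero N] : Measure (Cfg d A) :=
  ∑ w : Tor d N → A, ENNReal.ofReal (gw φ β N w) • Measure.dirac (per N w)

theorem nu_apply (φ : Cfg d A → ℝ) (β : ℝ) (N : ℕ) [NeZero N] {s : Set (Cfg d A)}
    (hs : MeasurableSet s) :
    nu φ β N s = ∑ w : Tor d N → A, if per N w ∈ s then ENNReal.ofReal (gw φ β N w) else 0 := by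
  unfold nu
  rw [Measure.finsetSum_apply]
  refine Finset.sum_congr rfl fun w _ => ?_
  rw [Measure.smul_apply, Measure.dirac_apply' _ hs, Set.indicator_apply]
  split_ifs <;> simp

theorem nu_real [Nonempty A] (φ : Cfg d A → ℝ) (β : ℝ) (N : ℕ) [NeZero N] {s : Set (Cfg d A)}
    (hs : MeasurableSet s) :
    (nu φ β N s).toReal = ∑ w : Tor d N → A, if per N w ∈ s then gw φ β N w else 0 := by
  rw [nu_apply φ β N hs, ENNReal.toReal_sum]
  · refine Finset.sum_congr rfl fun w _ => ?_
    split_ifs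
    · rw [ENNReal.toReal_ofReal (gw_nonneg φ β N w)]
    · simp
  · intro w _
    split_ifs <;> simp

theorem nu_prob [Nonempty A] (φ : Cfg d A → ℝ) (β : ℝ) (N : ℕ) [NeZero N] :
    IsProbabilityMeasure (nu φ β N) := by
  constructor
  rw [nu_apply φ β N MeasurableSet.univ]
  simp only [Set.mem_univ, if_true]
  rw [← ENNReal.ofReal_sum_of_nonneg fun w _ => gw_nonneg φ β N w, gw_sum]
  simp

theorem continuous_shift (n : Fin d → ℤ) : Continuous (shift n : Cfg d A → Cfg d A) :=
  continuous_pi fun m => continuous_apply (n + m)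

theorem measurable_shift (n : Fin d → ℤ) : Measurable (shift n : Cfg d A → Cfg d A) :=
  measurable_pi_lambda _ fun m => measurable_pi_apply (n + m)

theorem nu_inv (φ : Cfg d A → ℝ) (β : ℝ) (N : ℕ) [NeZero N] : Invariant (nu φ β N) := by
  intro n
  ext s hs
  rw [Measure.map_apply (measurable_shift n) hs, nu_apply φ β N hs,
    nu_apply φ β N (measurable_shift n hs)]
  refine Fintype.sum_equiv (transE (toT N n)) _ _ fun w => ?_
  have : w ∈ (per N) ⁻¹' (shift n ⁻¹' s) ↔ per N (transE (toT N n) w) ∈ s := by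
    rw [transE_apply, per_trans]; rfl
  rw [transE_apply, gw_trans, ← transE_apply]
  by_cases h : per N (transE (toT N n) w) ∈ s
  · rw [if_pos h]
    exact if_pos (this.mpr h)
  · rw [if_neg h]
    exact if_neg fun h' => h (this.mp h')

theorem nu_integral [Nonempty A] (φ : Cfg d A → ℝ) (β : ℝ) (N : ℕ) [NeZero N] (f : Cfg d A → ℝ)
    (hf : Continuous f) : ∫ x, f x ∂(nu φ β N) = ∑ w, gw φ β N w * f (per N w) := by
  unfold nu
  rw [integral_finsetSum_measure]
  · refine Finset.sum_congr rfl fun w _ => ?_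
    rw [integral_smul_measure, integral_dirac' _ _ hf.stronglyMeasurable,
      ENNReal.toReal_ofReal (gw_nonneg φ β N w), smul_eq_mul]
  · intro w _
    refine Integrable.smul_measure ?_ ENNReal.ofReal_ne_top
    obtain ⟨C, hC⟩ := exists_bound f hf
    exact Integrable.of_bound hf.stronglyMeasurable.aestronglyMeasurable C
      (Filter.Eventually.of_forall hC)

theorem measurableSet_cylE (n : ℕ) (w : (Fin d → Fin n) → A) : MeasurableSet (cylE n w) := by
  have : cylE n w = ⋂ m : Fin d → Fin n, (fun x : Cfg d A => x (natV m)) ⁻¹' {w m} := by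
    ext x
    simp [cylE]
    rfl
  rw [this]
  exact MeasurableSet.iInter fun m => measurable_pi_apply _ (measurableSet_singleton _)

theorem isClopen_cylE (n : ℕ) (w : (Fin d → Fin n) → A) : IsClopen (cylE n w) := by
  have : cylE n w = ⋂ m : Fin d → Fin n, (fun x : Cfg d A => x (natV m)) ⁻¹' {w m} := by
    ext x
    simp [cylE]
    rfl
  rw [this]
  exact isClopen_iInter_of_finite fun m =>
    (isClopen_discrete _).preimage (continuous_apply (natV m))

theorem nu_cyl [Nonempty A] (φ : Cfg d A → ℝ) (β : ℝ) (N : ℕ) [NeZero N] (m : ℕ) {M : ℕ}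
    (i : Fin d → Fin M) (p : (Fin d → Fin m) → A) :
    (∑ w : Tor d N → A, if (fun k => w (tile N m i k)) = p then gw φ β N w else 0)
      = (nu φ β N (cylE m p)).toReal := by
  rw [nu_real φ β N (measurableSet_cylE m p)]
  refine Fintype.sum_equiv (transE (toT N (corner m i))) _ _ fun w => ?_
  have : (fun k => w (tile N m i k)) = p ↔
      per N (transE (toT N (corner m i)) w) ∈ cylE m p := by
    rw [funext_iff, transE_apply]
    simp only [cylE, Set.mem_ofPred_eq, per, trans, ← toT_add]
    rfl
  have hg : gw φ β N (transE (toT N (corner m i)) w) = gw φ β N w := by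
    rw [transE_apply, gw_trans]
  by_cases h : per N (transE (toT N (corner m i)) w) ∈ cylE m p
  · rw [if_pos h, if_pos (this.mpr h), hg]
  · rw [if_neg h, if_neg fun h' => h (this.mp h')]

theorem nu_energy [Nonempty A] (φ : Cfg d A → ℝ) (hφ : Continuous φ) (β : ℝ) (N : ℕ) [NeZero N] :
    ∑ w, gw φ β N w * Ham φ N w = (N : ℝ) ^ d * ∫ x, φ x ∂(nu φ β N) := by
  rw [nu_integral φ β N φ hφ]
  unfold Ham
  simp_rw [Finset.mul_sum]
  rw [Finset.sum_comm]
  have : ∀ t : Tor d N, ∑ w, gw φ β N w * φ (per N (trans t w)) =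
      ∑ w, gw φ β N w * φ (per N w) := by
    intro t
    refine Fintype.sum_equiv (transE t) _ _ fun w => ?_
    simp only [transE, Equiv.coe_fn_mk]
    rw [gw_trans]
  rw [Finset.sum_congr rfl fun t _ => this t, Finset.sum_const, Finset.card_univ, nsmul_eq_mul,
    ← Finset.mul_sum]
  simp [ZMod.card]

theorem nu_ent [Nonempty A] (φ : Cfg d A → ℝ) (hφ : Continuous φ) (β : ℝ) (N : ℕ) [NeZero N]
    (m M : ℕ) (hN : m * M = N) :
    ((N : ℝ) ^ d)⁻¹ * Real.log (ZN φ β N) ≤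
      ((m : ℝ) ^ d)⁻¹ * ∑ p : (Fin d → Fin m) → A, Real.negMulLog (nu φ β N (cylE m p)).toReal
        + β * ∫ x, φ x ∂(nu φ β N) := by
  have h0 := gibbs_eq (fun w : Tor d N → A => β * Ham φ N w)
  have h1 : Real.log (ZN φ β N) = ∑ w, Real.negMulLog (gw φ β N w) +
      β * ∑ w, gw φ β N w * Ham φ N w := by
    unfold gw ZN
    rw [← h0, Finset.sum_add_distrib, Finset.mul_sum]
    congr 1
    refine Finset.sum_congr rfl fun w _ => ?_
    ring
  have h2 := subadd (fun (i : Fin d → Fin M) (w : Tor d N → A) =>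
      fun k : Fin d → Fin m => w (tile N m i k))
    (by
      intro w w' h
      funext t
      obtain ⟨i, k, rfl⟩ := tile_surj hN t
      exact congrFun (h i) k) (gw φ β N) (gw_nonneg φ β N) (gw_sum φ β N)
  have h2' : ∑ w, Real.negMulLog (gw φ β N w) ≤ ∑ _i : Fin d → Fin M,
      ∑ p : (Fin d → Fin m) → A, Real.negMulLog (nu φ β N (cylE m p)).toReal := by
    refine h2.trans (le_of_eq ?_)
    refine Finset.sum_congr rfl fun i _ => Finset.sum_congr rfl fun p _ => ?_
    congr 1
    rw [← nu_cyl φ β N m i p]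
    refine Finset.sum_congr rfl fun w _ => ?_
    congr
  clear h2
  rename' h2' => h2
  rw [Finset.sum_const, Finset.card_univ, nsmul_eq_mul] at h2
  simp only [Fintype.card_pi, Fintype.card_fin, Finset.prod_const, Finset.card_univ] at h2
  have hNpos : (0 : ℝ) < N := by exact_mod_cast Nat.pos_of_ne_zero (NeZero.ne N)
  have hNr : (N : ℝ) = m * M := by rw [← hN]; push_cast; ring
  have hm0 : (m : ℝ) ≠ 0 := by rintro h; rw [h, zero_mul] at hNr; linarith
  have hM0 : (M : ℝ) ≠ 0 := by rintro h; rw [h, mul_zero] at hNr; linarith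
  rw [h1, nu_energy φ hφ]
  push_cast at h2
  have h3 := mul_le_mul_of_nonneg_left h2 (show 0 ≤ ((N : ℝ) ^ d)⁻¹ by positivity)
  have h4 : ((N : ℝ) ^ d)⁻¹ * ((M : ℝ) ^ d *
      ∑ p : (Fin d → Fin m) → A, Real.negMulLog (nu φ β N (cylE m p)).toReal)
      = ((m : ℝ) ^ d)⁻¹ *
        ∑ p : (Fin d → Fin m) → A, Real.negMulLog (nu φ β N (cylE m p)).toReal := by
    rw [hNr, mul_pow]
    field_simp
  rw [h4] at h3
  rw [mul_add]
  have h5 : ((N : ℝ) ^ d)⁻¹ * (β * ((N : ℝ) ^ d * ∫ x, φ x ∂(nu φ β N)))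
      = β * ∫ x, φ x ∂(nu φ β N) := by field_simp
  rw [h5]
  linarith

end GibbsTorus

/-! ### Weak limits -/

section Limits

variable {d : ℕ} {A : Type} [Fintype A] [TopologicalSpace A] [DiscreteTopology A]
  [MeasurableSpace A] [BorelSpace A]

instance neZeroFact (j : ℕ) : NeZero (Nat.factorial j) := ⟨Nat.factorial_ne_zero j⟩

theorem outerApprox : HasOuterApproxClosed (Cfg d A) := by
  have : SecondCountableTopology A := by infer_instance
  let _ : MetricSpace (Cfg d A) := TopologicalSpace.metrizableSpaceMetric (Cfg d A)
  infer_instance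

/-- Finite volume pressure. -/
noncomputable def PN (φ : Cfg d A → ℝ) (β : ℝ) (N : ℕ) [NeZero N] : ℝ :=
  ((N : ℝ) ^ d)⁻¹ * Real.log (ZN φ β N)

theorem hard [Nonempty A] (φ : Cfg d A → ℝ) (hφ : Continuous φ) (β c : ℝ) (F : Filter ℕ) [F.NeBot]
    (hF : F ≤ atTop)
    (hc : ∀ ε > 0, ∀ᶠ j in F, c - ε ≤ PN φ β (Nat.factorial j)) :
    ∃ μ : Measure (Cfg d A), IsProbabilityMeasure μ ∧ Invariant μ ∧
      c ≤ entropy μ + β * ∫ x, φ x ∂μ := by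
  have : HasOuterApproxClosed (Cfg d A) := outerApprox
  let U : Ultrafilter ℕ := Ultrafilter.of F
  have hUF : (U : Filter ℕ) ≤ F := Ultrafilter.of_le F
  let P : ℕ → ProbabilityMeasure (Cfg d A) := fun j =>
    ⟨nu φ β (Nat.factorial j), nu_prob φ β (Nat.factorial j)⟩
  have hP : ∀ j, (P j : Measure (Cfg d A)) = nu φ β (Nat.factorial j) := fun j => rfl
  obtain ⟨μ, -, hμ⟩ := isCompact_univ.ultrafilter_le_nhds (U.map P) (by simp)
  have hμ : Tendsto P U (𝓝 μ) := hμ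
  refine ⟨μ, inferInstance, ?_, ?_⟩
  · intro n
    have h1 := ProbabilityMeasure.tendsto_map_of_tendsto_of_continuous P μ hμ (continuous_shift n)
    have h2 : (fun j => (P j).map (continuous_shift n).measurable.aemeasurable) = P := by
      funext j
      apply Subtype.ext
      exact nu_inv φ β (Nat.factorial j) n
    rw [h2] at h1
    have h3 := tendsto_nhds_unique h1 hμ
    exact congrArg Subtype.val h3
  · have hint : Tendsto (fun j => ∫ x, φ x ∂(P j : Measure (Cfg d A))) U (𝓝 (∫ x, φ x ∂(μ : Measure (Cfg d A)))) := by
      obtain ⟨C, hC⟩ := exists_bound φ hφ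
      exact (ProbabilityMeasure.tendsto_iff_forall_integral_tendsto.mp hμ)
        (BoundedContinuousFunction.ofNormedAddCommGroup φ hφ C hC)
    have key : ∀ n : {n : ℕ // 1 ≤ n}, c - β * ∫ x, φ x ∂(μ : Measure (Cfg d A)) ≤
        ((n.1 : ℝ) ^ d)⁻¹ *
          ∑ w : (Fin d → Fin n.1) → A,
            Real.negMulLog ((μ : Measure (Cfg d A)) (cylE n.1 w)).toReal := by
      rintro ⟨m, hm⟩
      have hcyl : ∀ w : (Fin d → Fin m) → A, Tendsto
          (fun j => Real.negMulLog ((P j : Measure (Cfg d A)) (cylE m w)).toReal) U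
          (𝓝 (Real.negMulLog ((μ : Measure (Cfg d A)) (cylE m w)).toReal)) := by
        intro w
        refine (Real.continuous_negMulLog.tendsto _).comp ?_
        refine (ENNReal.tendsto_toReal (measure_ne_top _ _)).comp ?_
        refine ProbabilityMeasure.tendsto_measure_of_null_frontier_of_tendsto' hμ ?_
        rw [(isClopen_cylE m w).frontier_eq]
        simp
      have hlim : Tendsto (fun j => ((m : ℝ) ^ d)⁻¹ * ∑ w : (Fin d → Fin m) → A,
          Real.negMulLog ((P j : Measure (Cfg d A)) (cylE m w)).toReal
          + β * ∫ x, φ x ∂(P j : Measure (Cfg d A))) U (𝓝 (((m : ℝ) ^ d)⁻¹ *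
          ∑ w : (Fin d → Fin m) → A,
            Real.negMulLog ((μ : Measure (Cfg d A)) (cylE m w)).toReal
            + β * ∫ x, φ x ∂(μ : Measure (Cfg d A)))) :=
        ((tendsto_finsetSum _ fun w _ => hcyl w).const_mul _).add (hint.const_mul β)
      rw [sub_le_iff_le_add]
      refine le_of_forall_pos_le_add fun ε hε => ?_
      rw [← sub_le_iff_le_add]
      refine ge_of_tendsto hlim ?_
      have e1 := hUF (hc ε hε)
      have e2 := hUF (hF (eventually_ge_atTop m))
      filter_upwards [e1, e2] with j h1 h2
      obtain ⟨M, hM⟩ := Nat.dvd_factorial hm h2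
      exact le_trans h1 (nu_ent φ hφ β (Nat.factorial j) m M hM.symm)
    have : Nonempty {n : ℕ // 1 ≤ n} := ⟨⟨1, le_rfl⟩⟩
    have := le_ciInf key
    unfold entropy
    linarith

/-- Restriction of a configuration to a torus. -/
def res (N : ℕ) (x : Cfg d A) : Tor d N → A := fun t => x fun i => ((t i).val : ℤ)

/-- integer representative. -/
def vv {N : ℕ} (t : Tor d N) : Fin d → ℤ := fun i => ((t i).val : ℤ)

theorem toT_vv {N : ℕ} [NeZero N] (t : Tor d N) : toT N (vv t) = t := by
  funext i; simp [toT, vv]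

theorem Ham_vv (φ : Cfg d A → ℝ) (N : ℕ) [NeZero N] (w : Tor d N → A) :
    Ham φ N w = ∑ t : Tor d N, φ (shift (vv t) (per N w)) := by
  unfold Ham
  refine Finset.sum_congr rfl fun t _ => ?_
  rw [← per_trans, toT_vv]

theorem per_res (N : ℕ) [NeZero N] (x : Cfg d A) (m : Fin d → ℤ) (h0 : ∀ i, 0 ≤ m i)
    (h1 : ∀ i, m i < N) : per N (res N x) m = x m := by
  unfold per res toT
  congr 1
  funext i
  rw [ZMod.val_intCast, Int.emod_eq_of_lt (h0 i) (h1 i)]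

theorem good_card (N r : ℕ) [NeZero N] (h : 2 * r ≤ N) :
    (N - 2 * r) ^ d ≤ (Finset.univ.filter fun t : Tor d N =>
      ∀ i, r ≤ (t i).val ∧ (t i).val + r ≤ N).card := by
  have : ((Finset.univ : Finset (Fin d → Fin (N - 2 * r)))).card = (N - 2 * r) ^ d := by
    simp
  rw [← this]
  refine Finset.card_le_card_of_injOn (fun k i => (((k i : ℕ) + r : ℕ) : ZMod N)) ?_ ?_
  · intro k _
    simp only [Finset.coe_filter, Finset.mem_univ, true_and, Set.mem_ofPred_eq]
    intro i
    have := (k i).2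
    rw [ZMod.val_natCast, Nat.mod_eq_of_lt (by omega)]
    omega
  · intro k _ k' _ hk
    funext i
    have h1 := congrArg ZMod.val (congrFun hk i)
    have := (k i).2
    have := (k' i).2
    simp only at h1
    rw [ZMod.val_natCast, Nat.mod_eq_of_lt (by omega), ZMod.val_natCast,
      Nat.mod_eq_of_lt (by omega)] at h1
    exact Fin.ext (by omega)

theorem err_lemma (hd : 1 ≤ d) (φ : Cfg d A → ℝ) (hφ : Continuous φ) (hs : SumVar d φ)
    (ε : ℝ) (hε : 0 < ε) : ∃ N0 : ℕ, ∀ (N : ℕ) [NeZero N], N0 ≤ N → ∀ x : Cfg d A,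
      |∑ t : Tor d N, φ (shift (vv t) x) - Ham φ N (res N x)| ≤ (N : ℝ) ^ d * ε := by
  obtain ⟨r, hr⟩ : ∃ r, osc φ r ≤ ε / 2 := by
    have := (osc_tendsto φ hs).eventually (gt_mem_nhds (half_pos hε))
    obtain ⟨r, hr⟩ := this.exists
    exact ⟨r, hr.le⟩
  obtain ⟨e, rfl⟩ : ∃ e, d = e + 1 := ⟨d - 1, by omega⟩
  obtain ⟨N1, hN1⟩ := exists_nat_ge (((e : ℝ) + 1) * (2 * r) * osc φ 0 / (ε / 2))
  refine ⟨max (2 * r) N1, fun N _ hN x => ?_⟩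
  have h2r : 2 * r ≤ N := le_trans (le_max_left _ _) hN
  have hN1' : N1 ≤ N := le_trans (le_max_right _ _) hN
  rw [Ham_vv, ← Finset.sum_sub_distrib]
  refine (Finset.abs_sum_le_sum_abs _ _).trans ?_
  set G := Finset.univ.filter fun t : Tor (e + 1) N =>
      ∀ i, r ≤ (t i).val ∧ (t i).val + r ≤ N with hG
  have hterm : ∀ t : Tor (e + 1) N, |φ (shift (vv t) x) - φ (shift (vv t) (per N (res N x)))| ≤
      ε / 2 + if t ∈ G then 0 else osc φ 0 := by
    intro t
    by_cases ht : t ∈ G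
    · rw [if_pos ht, add_zero]
      refine le_trans (le_osc φ hφ ?_) hr
      intro m hm
      simp only [hG, Finset.mem_filter, Finset.mem_univ, true_and] at ht
      unfold shift
      rw [per_res]
      · intro i
        have := natAbs_le_supNorm m i
        have := ht i
        simp only [Pi.add_apply, vv]
        omega
      · intro i
        have := natAbs_le_supNorm m i
        have := ht i
        simp only [Pi.add_apply, vv]
        omega
    · rw [if_neg ht]
      have := le_osc φ hφ (n := 0) (x := shift (vv t) x) (y := shift (vv t) (per N (res N x)))
        (fun m hm => absurd hm (by omega))
      linarith
  refine (Finset.sum_le_sum fun t _ => hterm t).trans ?_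
  rw [Finset.sum_add_distrib, Finset.sum_const, nsmul_eq_mul]
  have hcard : ((Finset.univ : Finset (Tor (e + 1) N)).card : ℝ) = (N : ℝ) ^ (e + 1) := by
    simp [ZMod.card]
  have h2 : ∑ t : Tor (e + 1) N, (if t ∈ G then 0 else osc φ 0) =
      ((N : ℝ) ^ (e + 1) - G.card) * osc φ 0 := by
    have : ∀ t : Tor (e + 1) N, (if t ∈ G then 0 else osc φ 0)
        = osc φ 0 - (if t ∈ G then osc φ 0 else 0) := by
      intro t; split_ifs <;> simp
    rw [Finset.sum_congr rfl fun t _ => this t, Finset.sum_sub_distrib, Finset.sum_const,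
      nsmul_eq_mul, hcard, Finset.sum_ite_mem, Finset.univ_inter, Finset.sum_const, nsmul_eq_mul]
    ring
  rw [h2, hcard]
  have hg : ((N : ℝ) - 2 * r) ^ (e + 1) ≤ G.card := by
    have := good_card (d := e + 1) N r h2r
    have h' : ((N - 2 * r : ℕ) : ℝ) = (N : ℝ) - 2 * r := by
      rw [Nat.cast_sub h2r]; push_cast; ring
    rw [← h']
    exact_mod_cast this
  have hp := pow_diff e (a := (N : ℝ)) (b := (N : ℝ) - 2 * r)
    (by have : ((2 * r : ℕ) : ℝ) ≤ N := by exact_mod_cast h2r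
        push_cast at this; linarith) (by have : (0:ℝ) ≤ r := by positivity
                                         linarith)
  have h3 : ((N : ℝ) ^ (e + 1) - G.card) * osc φ 0 ≤ (N : ℝ) ^ e * (N * (ε / 2)) := by
    have h4 : (N : ℝ) ^ (e + 1) - G.card ≤ ((e : ℝ) + 1) * (2 * r) * (N : ℝ) ^ e := by
      refine le_trans ?_ (le_trans hp (le_of_eq ?_))
      · linarith
      · ring
    have h5 := mul_le_mul_of_nonneg_right h4 (osc_nonneg φ 0)
    have h6 : ((e : ℝ) + 1) * (2 * r) * osc φ 0 ≤ N * (ε / 2) := by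
      rw [← div_le_iff₀ (half_pos hε)]
      exact hN1.trans (by exact_mod_cast hN1')
    have h7 := mul_le_mul_of_nonneg_left h6 (show (0 : ℝ) ≤ (N : ℝ) ^ e by positivity)
    linarith
  have : (N : ℝ) ^ e * (N * (ε / 2)) = (N : ℝ) ^ (e + 1) * (ε / 2) := by ring
  linarith

end Limits

/-! ### Variational principle -/

section VP

variable {d : ℕ} {A : Type} [Fintype A] [TopologicalSpace A] [DiscreteTopology A]
  [MeasurableSpace A] [BorelSpace A]

theorem measurable_res (N : ℕ) : Measurable (res N : Cfg d A → Tor d N → A) :=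
  measurable_pi_lambda _ fun _ => measurable_pi_apply _

/-- Law of the restriction. -/
noncomputable def pw (μ : Measure (Cfg d A)) (N : ℕ) (w : Tor d N → A) : ℝ :=
  (μ.map (res N)).real {w}

theorem pw_nonneg (μ : Measure (Cfg d A)) (N : ℕ) (w : Tor d N → A) : 0 ≤ pw μ N w :=
  measureReal_nonneg

theorem int_res (μ : Measure (Cfg d A)) [IsProbabilityMeasure μ] (N : ℕ) [NeZero N]
    (f : (Tor d N → A) → ℝ) : ∫ x, f (res N x) ∂μ = ∑ w, pw μ N w * f w := by
  have : IsProbabilityMeasure (μ.map (res N)) :=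
    Measure.isProbabilityMeasure_map (measurable_res N).aemeasurable
  have hf : Integrable f (μ.map (res N)) := Integrable.of_finite
  rw [← integral_map (measurable_res N).aemeasurable hf.aestronglyMeasurable, integral_fintype hf]
  rfl

theorem pw_sum (μ : Measure (Cfg d A)) [IsProbabilityMeasure μ] (N : ℕ) [NeZero N] :
    ∑ w, pw μ N w = 1 := by
  have := int_res μ N fun _ => 1
  simpa using this.symm

theorem int_shift (μ : Measure (Cfg d A)) (hμ : Invariant μ) (φ : Cfg d A → ℝ) (hφ : Continuous φ)
    (n : Fin d → ℤ) : ∫ x, φ (shift n x) ∂μ = ∫ x, φ x ∂μ := by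
  have h := integral_map (μ := μ) (measurable_shift n).aemeasurable (f := φ)
    hφ.stronglyMeasurable.aestronglyMeasurable
  rw [hμ n] at h
  exact h.symm

theorem integrable_cont (μ : Measure (Cfg d A)) [IsProbabilityMeasure μ] (φ : Cfg d A → ℝ)
    (hφ : Continuous φ) : Integrable φ μ := by
  obtain ⟨C, hC⟩ := exists_bound φ hφ
  exact Integrable.of_bound hφ.stronglyMeasurable.aestronglyMeasurable C
      (Filter.Eventually.of_forall hC)

theorem int_err (μ : Measure (Cfg d A)) [IsProbabilityMeasure μ] (hμ : Invariant μ)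
    (φ : Cfg d A → ℝ) (hφ : Continuous φ) (N : ℕ) [NeZero N] (ε : ℝ)
    (h : ∀ x : Cfg d A,
      |∑ t : Tor d N, φ (shift (vv t) x) - Ham φ N (res N x)| ≤ (N : ℝ) ^ d * ε) :
    |(N : ℝ) ^ d * ∫ x, φ x ∂μ - ∑ w, pw μ N w * Ham φ N w| ≤ (N : ℝ) ^ d * ε := by
  have h1 : ∫ x, ∑ t : Tor d N, φ (shift (vv t) x) ∂μ = (N : ℝ) ^ d * ∫ x, φ x ∂μ := by
    rw [integral_finsetSum (f := fun (t : Tor d N) x => φ (shift (vv t) x)) _ fun t _ =>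
      integrable_cont μ _ (hφ.comp (continuous_shift (vv t)))]
    simp_rw [int_shift μ hμ φ hφ]
    rw [Finset.sum_const, nsmul_eq_mul]
    simp [ZMod.card]
  rw [← h1, ← int_res μ N (Ham φ N), ← integral_sub]
  · have := norm_integral_le_of_norm_le_const (μ := μ) (C := (N : ℝ) ^ d * ε)
      (f := fun x => ∑ t : Tor d N, φ (shift (vv t) x) - Ham φ N (res N x))
      (Eventually.of_forall h)
    simpa using this
  · exact integrable_finsetSum _ fun t _ =>
      integrable_cont μ _ (hφ.comp (continuous_shift (vv t)))
  · have : IsProbabilityMeasure (μ.map (res N)) :=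
      Measure.isProbabilityMeasure_map (measurable_res N).aemeasurable
    have hf : Integrable (Ham φ N) (μ.map (res N)) := Integrable.of_finite
    exact hf.comp_measurable (measurable_res N)

theorem ent_le (μ : Measure (Cfg d A)) [IsProbabilityMeasure μ] (N : ℕ) [NeZero N] :
    entropy μ ≤ ((N : ℝ) ^ d)⁻¹ * ∑ w : Tor d N → A, Real.negMulLog (pw μ N w) := by
  have hN : 1 ≤ N := Nat.one_le_iff_ne_zero.mpr (NeZero.ne N)
  have hb : BddBelow (Set.range fun n : {n : ℕ // 1 ≤ n} => ((n.1 : ℝ) ^ d)⁻¹ *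
      ∑ w : (Fin d → Fin n.1) → A, Real.negMulLog (μ (cylE n.1 w)).toReal) := by
    refine ⟨0, ?_⟩
    rintro _ ⟨n, rfl⟩
    refine mul_nonneg (by positivity) (Finset.sum_nonneg fun w _ => ?_)
    exact Real.negMulLog_nonneg ENNReal.toReal_nonneg
      (ENNReal.toReal_le_of_le_ofReal zero_le_one (by simpa using prob_le_one))
  refine (ciInf_le hb ⟨N, hN⟩).trans (le_of_eq ?_)
  congr 1
  obtain ⟨n, rfl⟩ : ∃ n, N = n + 1 := ⟨N - 1, by omega⟩
  refine Fintype.sum_equiv (Equiv.refl ((Fin d → Fin (n + 1)) → A)) _ _ fun w => ?_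
  congr 1
  unfold pw
  have hm : MeasurableSet ({w} : Set (Tor d (n + 1) → A)) := measurableSet_singleton _
  rw [Measure.real]
  congr 1
  refine Eq.trans ?_ (Measure.map_apply (measurable_res (n + 1)) hm).symm
  congr 1
  ext x
  simp only [cylE, Set.mem_ofPred_eq, Set.mem_preimage]
  exact (funext_iff (f := res (n + 1) x) (g := w)).symm

theorem easy (hd : 1 ≤ d) (φ : Cfg d A → ℝ) (hφ : Continuous φ) (hs : SumVar d φ)
    (β ε : ℝ) (hε : 0 < ε) : ∃ N0 : ℕ, ∀ (N : ℕ) [NeZero N], N0 ≤ N → ∀ μ : Measure (Cfg d A),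
      IsProbabilityMeasure μ → Invariant μ →
      entropy μ + β * ∫ x, φ x ∂μ ≤ PN φ β N + ε := by
  obtain ⟨N0, h0⟩ := err_lemma hd φ hφ hs (ε / (|β| + 1)) (by positivity)
  refine ⟨N0, fun N _ hN μ hp hμ => ?_⟩
  have h1 := int_err μ hμ φ hφ N _ (h0 N hN)
  have h2 := ent_le μ N
  have h3 := jensen_log (pw μ N) (fun w => β * Ham φ N w) (pw_nonneg μ N) (pw_sum μ N)
  have hNpos : (0 : ℝ) < (N : ℝ) ^ d := by
    have : (0 : ℝ) < N := by exact_mod_cast Nat.pos_of_ne_zero (NeZero.ne N)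
    positivity
  rw [Finset.sum_add_distrib] at h3
  have h4 : ∑ w, pw μ N w * (β * Ham φ N w) = β * ∑ w, pw μ N w * Ham φ N w := by
    rw [Finset.mul_sum]; exact Finset.sum_congr rfl fun w _ => by ring
  rw [h4] at h3
  have h5 : |β * ((N : ℝ) ^ d * ∫ x, φ x ∂μ - ∑ w, pw μ N w * Ham φ N w)| ≤ (N : ℝ) ^ d * ε := by
    rw [abs_mul]
    refine (mul_le_mul_of_nonneg_left h1 (abs_nonneg β)).trans ?_
    have : |β| * (ε / (|β| + 1)) ≤ ε := by
      rw [← mul_div_assoc, div_le_iff₀ (by positivity)]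
      nlinarith [abs_nonneg β]
    have := mul_le_mul_of_nonneg_left this hNpos.le
    linarith
  have h6 := (abs_le.mp h5).2
  have h7 : (N : ℝ) ^ d * entropy μ ≤ ∑ w : Tor d N → A, Real.negMulLog (pw μ N w) := by
    have := mul_le_mul_of_nonneg_left h2 hNpos.le
    rwa [mul_inv_cancel_left₀ hNpos.ne'] at this
  have h8 : (N : ℝ) ^ d * PN φ β N = Real.log (ZN φ β N) := by
    unfold PN
    rw [mul_inv_cancel_left₀ hNpos.ne']
  have h9 : ∑ w, Real.exp (β * Ham φ N w) = ZN φ β N := rfl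
  rw [h9, ← h8] at h3
  refine le_of_mul_le_mul_left ?_ hNpos
  nlinarith

theorem bdd (hd : 1 ≤ d) (φ : Cfg d A → ℝ) (hφ : Continuous φ) (hs : SumVar d φ) (β : ℝ) :
    BddAbove { r | ∃ μ : Measure (Cfg d A), IsProbabilityMeasure μ ∧ Invariant μ ∧
    r = entropy μ + β * ∫ x, φ x ∂μ } := by
  obtain ⟨N0, h0⟩ := easy hd φ hφ hs β 1 one_pos
  refine ⟨PN φ β (N0 + 1) + 1, ?_⟩
  rintro r ⟨μ, hp, hi, rfl⟩
  exact h0 (N0 + 1) (by omega) μ hp hi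

theorem le_pressure (hd : 1 ≤ d) (φ : Cfg d A → ℝ) (hφ : Continuous φ) (hs : SumVar d φ) (β : ℝ)
    (μ : Measure (Cfg d A)) (hp : IsProbabilityMeasure μ) (hi : Invariant μ) :
    entropy μ + β * ∫ x, φ x ∂μ ≤ pressure φ β :=
  le_csSup (bdd hd φ hφ hs β) ⟨μ, hp, hi, rfl⟩

theorem pressure_le_PN [Nonempty A] (hd : 1 ≤ d) (φ : Cfg d A → ℝ) (hφ : Continuous φ)
    (hs : SumVar d φ) (β ε : ℝ) (hε : 0 < ε) :
    ∀ᶠ j in atTop, pressure φ β - ε ≤ PN φ β (Nat.factorial j) := by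
  obtain ⟨N0, h0⟩ := easy hd φ hφ hs β ε hε
  filter_upwards [eventually_ge_atTop N0] with j hj
  rw [sub_le_iff_le_add]
  refine csSup_le ⟨_, nu φ 0 1, nu_prob φ 0 1, nu_inv φ 0 1, rfl⟩ ?_
  rintro r ⟨μ, hp, hi, rfl⟩
  exact h0 _ (hj.trans (Nat.self_le_factorial j)) μ hp hi

theorem PN_le_pressure [Nonempty A] (hd : 1 ≤ d) (φ : Cfg d A → ℝ) (hφ : Continuous φ)
    (hs : SumVar d φ) (β ε : ℝ) (hε : 0 < ε) :
    ∀ᶠ j in atTop, PN φ β (Nat.factorial j) ≤ pressure φ β + ε := by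
  by_contra hcon
  have hf : ∃ᶠ j in atTop, pressure φ β + ε < PN φ β (Nat.factorial j) := by
    simpa [Filter.Frequently] using hcon
  have hne : (atTop ⊓ 𝓟 {j : ℕ | pressure φ β + ε < PN φ β (Nat.factorial j)}).NeBot :=
    frequently_mem_iff_neBot.mp hf
  obtain ⟨μ, hp, hi, h⟩ := hard φ hφ β (pressure φ β + ε) _
    (inf_le_left : atTop ⊓ 𝓟 {j : ℕ | pressure φ β + ε < PN φ β (Nat.factorial j)} ≤ atTop) (by
      intro δ hδ
      have : ∀ᶠ j in atTop ⊓ 𝓟 {j : ℕ | pressure φ β + ε < PN φ β (Nat.factorial j)},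
          j ∈ {j : ℕ | pressure φ β + ε < PN φ β (Nat.factorial j)} :=
        Filter.mem_inf_of_right (mem_principal_self _)
      filter_upwards [this] with j hj
      have : pressure φ β + ε < PN φ β (Nat.factorial j) := hj
      linarith)
  have := le_pressure hd φ hφ hs β μ hp hi
  linarith

theorem ES_nonempty [Nonempty A] (hd : 1 ≤ d) (φ : Cfg d A → ℝ) (hφ : Continuous φ)
    (hs : SumVar d φ) (β : ℝ) : (ES φ β).Nonempty := by
  obtain ⟨μ, hp, hi, h⟩ := hard φ hφ β (pressure φ β) atTop le_rfl
    (pressure_le_PN hd φ hφ hs β)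
  exact ⟨μ, hp, hi, le_antisymm (le_pressure hd φ hφ hs β μ hp hi) h⟩

end VP

/-! ### The trivial case -/

section Trivial

variable {d : ℕ} {A : Type} [Fintype A] [TopologicalSpace A] [DiscreteTopology A]
  [MeasurableSpace A] [BorelSpace A]

theorem supNorm_eq_zero {m : Fin d → ℤ} (h : supNorm m = 0) : m = 0 := by
  funext i
  have := natAbs_le_supNorm m i
  simp only [Pi.zero_apply]
  omega

theorem supNorm_zero : supNorm (0 : Fin d → ℤ) = 0 := by
  have : supNorm (0 : Fin d → ℤ) ≤ 0 := supNorm_le.mpr fun i => by simp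
  omega

theorem toT_zero (N : ℕ) : toT N (0 : Fin d → ℤ) = 0 := by
  funext i; simp [toT]

/-- All relative energies vanish. -/
def TrivialPot (φ : Cfg d A → ℝ) : Prop :=
  ∀ (R : ℕ) (x y : Cfg d A), (∀ m, R < supNorm m → x m = y m) → relE φ x y = 0

theorem one_site (hd : 1 ≤ d) (φ : Cfg d A → ℝ) (hφ : Continuous φ) (hs : SumVar d φ)
    (H : TrivialPot φ) (ε : ℝ) (hε : 0 < ε) : ∃ L : ℕ, ∀ (N : ℕ) [NeZero N], L ≤ N →
      ∀ (w w' : Tor d N → A) (t₀ : Tor d N), (∀ t, t ≠ t₀ → w t = w' t) →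
        |Ham φ N w - Ham φ N w'| ≤ ε := by
  obtain ⟨L, hL⟩ := approx hd φ hφ hs 0 ε hε
  refine ⟨L + 1, fun N _ hN w w' t₀ hw => ?_⟩
  have hdiff : ∀ s : Tor d N, s ≠ 0 → trans t₀ w s = trans t₀ w' s := by
    intro s hs0
    exact hw _ (by simpa using hs0)
  set x : Cfg d A := per N (trans t₀ w) with hx
  set y : Cfg d A := fun m => if m = 0 then trans t₀ w' 0 else x m with hy
  have hxy : ∀ m, 0 < supNorm m → x m = y m := by
    intro m hm
    have : m ≠ 0 := by
      rintro rfl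
      rw [supNorm_zero] at hm
      omega
    simp [hy, this]
  have := hL N (by omega) x y hxy (trans t₀ w) (trans t₀ w')
    (by
      intro t ht
      refine ⟨0, supNorm_zero.le, ?_⟩
      rw [toT_zero]
      by_contra hne
      exact ht (hdiff t fun h => hne h.symm))
    (fun m _ => rfl)
    (by
      intro m hm
      by_cases h0 : m = 0
      · subst h0
        simp [hy, per, toT_zero]
      · simp only [hy, if_neg h0, hx, per]
        refine (hdiff _ fun h => h0 ?_).symm
        funext i
        have h1 := congrFun h i
        simp only [toT, Pi.zero_apply] at h1
        rw [ZMod.intCast_zmod_eq_zero_iff_dvd] at h1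
        have a := natAbs_le_supNorm m i
        exact Int.eq_zero_of_abs_lt_dvd h1 (by rw [abs_lt]; omega))
  rw [H 0 x y hxy, Ham_trans, Ham_trans, sub_zero] at this
  exact this

theorem all_sites (hd : 1 ≤ d) (φ : Cfg d A → ℝ) (hφ : Continuous φ) (hs : SumVar d φ)
    (H : TrivialPot φ) (ε : ℝ) (hε : 0 < ε) : ∃ L : ℕ, ∀ (N : ℕ) [NeZero N], L ≤ N →
      ∀ (w w' : Tor d N → A), |Ham φ N w - Ham φ N w'| ≤ (N : ℝ) ^ d * ε := by
  obtain ⟨L, hL⟩ := one_site hd φ hφ hs H ε hε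
  refine ⟨L, fun N _ hN w w' => ?_⟩
  have key : ∀ S : Finset (Tor d N),
      |Ham φ N (S.piecewise w w') - Ham φ N w'| ≤ S.card * ε := by
    intro S
    induction S using Finset.induction_on with
    | empty => simp
    | insert j S hj ih =>
      rw [Finset.piecewise_insert, Finset.card_insert_of_notMem hj]
      have h1 := hL N hN (Function.update (S.piecewise w w') j (w j)) (S.piecewise w w') j
        (fun t ht => by simp [ht])
      push_cast
      have := abs_sub_le (Ham φ N (Function.update (S.piecewise w w') j (w j)))
        (Ham φ N (S.piecewise w w')) (Ham φ N w')
      linarith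
  have := key Finset.univ
  rw [Finset.piecewise_univ] at this
  simpa [ZMod.card] using this

theorem triv_int (hd : 1 ≤ d) (φ : Cfg d A → ℝ) (hφ : Continuous φ) (hs : SumVar d φ)
    (H : TrivialPot φ) (a : A) (μ : Measure (Cfg d A)) (hp : IsProbabilityMeasure μ)
    (hi : Invariant μ) : ∫ x, φ x ∂μ = φ fun _ => a := by
  have key : ∀ ε > 0, |∫ x, φ x ∂μ - φ fun _ => a| ≤ 0 + ε := by
    intro ε hε
    obtain ⟨L, hL⟩ := all_sites hd φ hφ hs H (ε / 2) (half_pos hε)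
    obtain ⟨N0, hN0⟩ := err_lemma hd φ hφ hs (ε / 2) (half_pos hε)
    set N := max L N0 + 1 with hN
    have h1 := int_err μ hi φ hφ N (ε / 2) (hN0 N (by omega))
    have h2 := hL N (by omega)
    have hc : Ham φ N (fun _ => a) = (N : ℝ) ^ d * φ fun _ => a := by
      unfold Ham
      have : ∀ t : Tor d N, φ (per N (trans t fun _ => a)) = φ fun _ => a := fun t => rfl
      rw [Finset.sum_congr rfl fun t _ => this t, Finset.sum_const, nsmul_eq_mul]
      simp [ZMod.card]
    have h3 : |∑ w, pw μ N w * Ham φ N w - (N : ℝ) ^ d * φ fun _ => a| ≤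
        (N : ℝ) ^ d * (ε / 2) := by
      have e : ∑ w, pw μ N w * Ham φ N w - (N : ℝ) ^ d * φ (fun _ => a) =
          ∑ w, pw μ N w * (Ham φ N w - Ham φ N fun _ => a) := by
        simp_rw [mul_sub]
        rw [Finset.sum_sub_distrib, ← Finset.sum_mul, pw_sum, one_mul, hc]
      rw [e]
      refine (Finset.abs_sum_le_sum_abs _ _).trans ?_
      calc ∑ w, |pw μ N w * (Ham φ N w - Ham φ N fun _ => a)|
          ≤ ∑ w, pw μ N w * ((N : ℝ) ^ d * (ε / 2)) := by
            refine Finset.sum_le_sum fun w _ => ?_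
            rw [abs_mul, abs_of_nonneg (pw_nonneg μ N w)]
            exact mul_le_mul_of_nonneg_left (h2 _ _) (pw_nonneg μ N w)
        _ = (N : ℝ) ^ d * (ε / 2) := by rw [← Finset.sum_mul, pw_sum, one_mul]
    have hNpos : (0 : ℝ) < (N : ℝ) ^ d := by positivity
    have h4 := abs_sub_le ((N : ℝ) ^ d * ∫ x, φ x ∂μ) (∑ w, pw μ N w * Ham φ N w)
      ((N : ℝ) ^ d * φ fun _ => a)
    rw [← mul_sub, abs_mul, abs_of_pos hNpos] at h4
    rw [zero_add]
    refine le_of_mul_le_mul_left ?_ hNpos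
    linarith
  have := le_of_forall_pos_le_add key
  have := abs_eq_zero.mp (le_antisymm this (abs_nonneg _))
  linarith

theorem mem_ES_iff (hd : 1 ≤ d) (φ : Cfg d A → ℝ) (hφ : Continuous φ) (hs : SumVar d φ)
    (β : ℝ) (μ : Measure (Cfg d A)) : μ ∈ ES φ β ↔ IsProbabilityMeasure μ ∧ Invariant μ ∧
      ∀ ν : Measure (Cfg d A), IsProbabilityMeasure ν → Invariant ν →
        entropy ν + β * ∫ x, φ x ∂ν ≤ entropy μ + β * ∫ x, φ x ∂μ := by
  constructor
  · rintro ⟨hp, hi, h⟩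
    refine ⟨hp, hi, fun ν hp' hi' => ?_⟩
    rw [h]
    exact le_pressure hd φ hφ hs β ν hp' hi'
  · rintro ⟨hp, hi, h⟩
    refine ⟨hp, hi, le_antisymm (le_pressure hd φ hφ hs β μ hp hi) ?_⟩
    refine csSup_le ⟨_, μ, hp, hi, rfl⟩ ?_
    rintro r ⟨ν, hp', hi', rfl⟩
    exact h ν hp' hi'

theorem triv_ES [Nonempty A] (hd : 1 ≤ d) (φ : Cfg d A → ℝ) (hφ : Continuous φ) (hs : SumVar d φ)
    (H : TrivialPot φ) (β β' : ℝ) : ES φ β = ES φ β' := by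
  obtain ⟨a⟩ := ‹Nonempty A›
  have key : ∀ β β' : ℝ, ES φ β ⊆ ES φ β' := by
    intro β β' μ hμ
    rw [mem_ES_iff hd φ hφ hs] at hμ ⊢
    obtain ⟨hp, hi, h⟩ := hμ
    refine ⟨hp, hi, fun ν hp' hi' => ?_⟩
    have := h ν hp' hi'
    rw [triv_int hd φ hφ hs H a μ hp hi, triv_int hd φ hφ hs H a ν hp' hi'] at this ⊢
    linarith
  exact Set.Subset.antisymm (key _ _) (key _ _)

end Trivial

/-! ### The nontrivial case -/

section Nontriv

variable {d : ℕ} {A : Type} [Fintype A] [TopologicalSpace A] [DiscreteTopology A]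
  [MeasurableSpace A] [BorelSpace A]

/-- The centre of a tile of side `2R+1`. -/
def ctr (R : ℕ) {M : ℕ} (i : Fin d → Fin M) : Fin d → ℤ := corner (2 * R + 1) i + fun _ => (R : ℤ)

/-- Centred coordinates. -/
def off (R : ℕ) (k : Fin d → Fin (2 * R + 1)) : Fin d → ℤ := natV k - fun _ => (R : ℤ)

theorem tile_ctr (N R : ℕ) {M : ℕ} (i : Fin d → Fin M) (k : Fin d → Fin (2 * R + 1)) :
    tile N (2 * R + 1) i k = toT N (ctr R i) + toT N (off R k) := by
  rw [← toT_add]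
  unfold tile ctr off
  congr 1
  abel

theorem off_le (R : ℕ) (k : Fin d → Fin (2 * R + 1)) : supNorm (off R k) ≤ R := by
  rw [supNorm_le]
  intro i
  have := (k i).2
  simp only [off, natV, Pi.sub_apply]
  omega

theorem off_surj (R : ℕ) (m : Fin d → ℤ) (hm : supNorm m ≤ R) : ∃ k, off R k = m := by
  rw [supNorm_le] at hm
  refine ⟨fun i => ⟨(m i + R).toNat, by have := hm i; omega⟩, ?_⟩
  funext i
  have := hm i
  simp only [off, natV, Pi.sub_apply]
  omega

theorem tile_injective {N m M : ℕ} (hN : m * M = N) (i : Fin d → Fin M) :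
    Function.Injective (tile N m i) := fun _ _ h => (tile_inj hN h).2

theorem diff_tile {N R M : ℕ} (hN : (2 * R + 1) * M = N) (i : Fin d → Fin M)
    (w w' : (Fin d → Fin (2 * R + 1)) → A) (z : Tor d N → A) (t : Tor d N)
    (h : trans (toT N (ctr R i)) (Function.extend (tile N (2 * R + 1) i) w z) t ≠
      trans (toT N (ctr R i)) (Function.extend (tile N (2 * R + 1) i) w' z) t) :
    ∃ k, toT N (off R k) = t ∧ w k ≠ w' k := by
  unfold trans at h
  by_cases hk : ∃ k, tile N (2 * R + 1) i k = toT N (ctr R i) + t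
  · obtain ⟨k, hk⟩ := hk
    refine ⟨k, ?_, ?_⟩
    · rw [tile_ctr] at hk
      exact add_left_cancel hk
    · rw [← hk, (tile_injective hN i).extend_apply, (tile_injective hN i).extend_apply] at h
      exact h
  · rw [Function.extend_apply' _ _ _ hk, Function.extend_apply' _ _ _ hk] at h
    exact absurd rfl h

set_option maxHeartbeats 1000000 in
theorem NT_main [Nonempty A] (hd : 1 ≤ d) (φ : Cfg d A → ℝ) (hφ : Continuous φ) (hs : SumVar d φ)
    (R : ℕ) (x y : Cfg d A) (hxy : ∀ m, R < supNorm m → x m = y m) (hD : 0 < relE φ x y)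
    (β : ℝ) (hβ : 0 < β) :
    ∃ δ > 0, ∀ᶠ j in atTop, 2 * PN φ (β + 1) (Nat.factorial j) + δ ≤
      PN φ β (Nat.factorial j) + PN φ (β + 2) (Nat.factorial j) := by
  set D := relE φ x y with hDdef
  set ε := D / (2 * (β + 1)) with hεdef
  have hε : 0 < ε := by positivity
  have hεD : ε * (2 * (β + 1)) = D := by rw [hεdef]; field_simp
  obtain ⟨L, hL⟩ := approx hd φ hφ hs R ε hε
  set S := max L R with hS
  set l := 2 * S + 1 with hl
  set u : (Fin d → Fin (2 * S + 1)) → A := fun k => x (off S k) with hu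
  set v : (Fin d → Fin (2 * S + 1)) → A := fun k => y (off S k) with hv
  set C := ∑' k : Fin d → ℤ, osc φ (supNorm k - S) with hC
  have hC0 : 0 ≤ C := tsum_nonneg fun k => osc_nonneg φ _
  set q := (β * (D + ε) - (β + 2) * (D - ε)) / 2 with hq
  have hq0 : q < 0 := by
    have : q = -(D / 2) := by
      rw [hq]
      linear_combination hεD / 2
    rw [this]; linarith
  set c := Real.exp ((β + 2) * C) with hc
  have hc1 : 1 ≤ c := Real.one_le_exp (by positivity)
  set r := Real.exp q with hr
  have hr1 : r < 1 := by rw [hr, Real.exp_lt_one_iff]; exact hq0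
  have hr0 : 0 < r := Real.exp_pos _
  set θ := 1 - ((Fintype.card ((Fin d → Fin (2 * S + 1)) → A) : ℝ) * c)⁻¹ ^ 2 * (1 - r) ^ 2 / 2
    with hθ
  have hcard : (1 : ℝ) ≤ (Fintype.card ((Fin d → Fin (2 * S + 1)) → A) : ℝ) := by
    exact_mod_cast Fintype.card_pos_iff.mpr ⟨u⟩
  set κ := ((Fintype.card ((Fin d → Fin (2 * S + 1)) → A) : ℝ) * c)⁻¹ ^ 2 with hκ
  have hκ0 : 0 < κ := by positivity
  have hκ1 : κ ≤ 1 := by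
    rw [hκ]
    exact pow_le_one₀ (by positivity) (inv_le_one_of_one_le₀ (by nlinarith))
  have hsq : 0 < (1 - r) ^ 2 := pow_pos (by linarith) 2
  have hsq1 : (1 - r) ^ 2 ≤ 1 := by nlinarith
  have hθ1 : θ < 1 := by
    have := mul_pos hκ0 hsq
    rw [hθ]; linarith
  have hθ0 : 0 < θ := by
    have : κ * (1 - r) ^ 2 ≤ 1 := by nlinarith
    rw [hθ]; linarith
  have hlog : Real.log θ < 0 := Real.log_neg hθ0 hθ1
  have hlpos : (0 : ℝ) < (l : ℝ) ^ d := by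
    have : (0 : ℝ) < l := by rw [hl]; positivity
    positivity
  refine ⟨-Real.log θ / (l : ℝ) ^ d, div_pos (by linarith) hlpos, ?_⟩
  filter_upwards [eventually_ge_atTop l] with j hj
  obtain ⟨M, hM⟩ := Nat.dvd_factorial (show 0 < l by omega) hj
  have hNl : l ≤ Nat.factorial j := hj.trans (Nat.self_le_factorial j)
  suffices hN : ∀ (N : ℕ) [NeZero N], N = l * M → l ≤ N →
      2 * PN φ (β + 1) N + -Real.log θ / (l : ℝ) ^ d ≤ PN φ β N + PN φ (β + 2) N from
    hN (Nat.factorial j) hM hNl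
  clear hM hNl
  intro N _ hM hNl
  have hM' : (2 * S + 1) * M = N := hM.symm
  -- energy estimates
  have hE1 : ∀ (i : Fin d → Fin M) w w' z,
      |Ham φ N (Function.extend (tile N (2 * S + 1) i) w z) -
        Ham φ N (Function.extend (tile N (2 * S + 1) i) w' z)| ≤ C := by
    intro i w w' z
    rw [← Ham_trans φ N (toT N (ctr S i)) (Function.extend (tile N (2 * S + 1) i) w z),
      ← Ham_trans φ N (toT N (ctr S i)) (Function.extend (tile N (2 * S + 1) i) w' z)]
    refine Ham_diff_le hd φ hφ hs ?_
    intro t ht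
    obtain ⟨k, hk, -⟩ := diff_tile hM' i w w' z t ht
    exact ⟨off S k, off_le S k, hk⟩
  have hper : ∀ (i : Fin d → Fin M) (X : Cfg d A) z m, supNorm m ≤ L →
      per N (trans (toT N (ctr S i)) (Function.extend (tile N (2 * S + 1) i)
        (fun k => X (off S k)) z)) m = X m := by
    intro i X z m hm
    obtain ⟨k, rfl⟩ := off_surj S m (hm.trans (le_max_left _ _))
    unfold per trans
    rw [← tile_ctr, (tile_injective hM' i).extend_apply]
  have hE2 : ∀ (i : Fin d → Fin M) z,
      |Ham φ N (Function.extend (tile N (2 * S + 1) i) u z) -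
        Ham φ N (Function.extend (tile N (2 * S + 1) i) v z) - D| ≤ ε := by
    intro i z
    rw [← Ham_trans φ N (toT N (ctr S i)) (Function.extend (tile N (2 * S + 1) i) u z),
      ← Ham_trans φ N (toT N (ctr S i)) (Function.extend (tile N (2 * S + 1) i) v z)]
    refine hL N ?_ x y hxy _ _ ?_ (hper i x z) (hper i y z)
    · have : L ≤ S := le_max_left _ _
      omega
    · intro t ht
      obtain ⟨k, hk, hne⟩ := diff_tile hM' i u v z t ht
      refine ⟨off S k, ?_, hk⟩
      by_contra hcon
      exact hne (hxy _ (by omega))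
  have hmain := block_main (T := Tor d N) (B := A) (fun i : Fin d → Fin M => tile N (2 * S + 1) i)
    (tile_injective hM')
    (fun i i' hii k k' h => hii (tile_inj hM' h).1)
    (fun w => Real.exp (β * Ham φ N w)) (fun w => Real.exp ((β + 1) * Ham φ N w))
    (fun w => Real.exp ((β + 2) * Ham φ N w))
    (fun _ => Real.exp_pos _) (fun _ => Real.exp_pos _) (fun _ => Real.exp_pos _)
    (fun w => by
      rw [← Real.exp_nat_mul, ← Real.exp_add]; congr 1; push_cast; ring)
    u v c (Real.exp (β * (D + ε))) (Real.exp (-((β + 2) * (D - ε)))) r hc1 hr0.le hr1.le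
    (Real.exp_pos _).le
    (by
      rw [hr, ← Real.exp_add, ← Real.exp_nat_mul]
      apply Real.exp_le_exp.mpr
      rw [hq]; push_cast; linarith)
    (fun i w w' z => by
      rw [hc, ← Real.exp_add]
      apply Real.exp_le_exp.mpr
      have := (abs_le.mp (hE1 i w w' z)).2
      nlinarith)
    (fun i w w' z => by
      rw [hc, ← Real.exp_add]
      apply Real.exp_le_exp.mpr
      have := (abs_le.mp (hE1 i w w' z)).2
      nlinarith)
    (fun i z => by
      rw [← Real.exp_add]
      apply Real.exp_le_exp.mpr
      have := (abs_le.mp (hE2 i z)).2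
      nlinarith)
    (fun i z => by
      rw [← Real.exp_add]
      apply Real.exp_le_exp.mpr
      have := (abs_le.mp (hE2 i z)).1
      nlinarith)
  have hZ : (ZN φ (β + 1) N) ^ 2 ≤ θ ^ (M ^ d) * (ZN φ β N * ZN φ (β + 2) N) := by
    have hcI : Fintype.card (Fin d → Fin M) = M ^ d := by simp
    rw [hcI] at hmain
    have key : ∀ (i1 i2 : Fintype (Tor d N → A)) (f : (Tor d N → A) → ℝ),
        @Finset.sum _ ℝ _ (@Finset.univ _ i1) f = @Finset.sum _ ℝ _ (@Finset.univ _ i2) f := by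
      intro i1 i2 f
      rw [Subsingleton.elim i1 i2]
    unfold ZN
    refine le_of_eq_of_le (congrArg (fun a : ℝ => a ^ 2) (key _ _ _))
      (hmain.trans (le_of_eq (congrArg₂ (fun a b : ℝ => a * b)
        (congrArg (fun a : ℝ => a ^ (M ^ d)) ?_)
        (congrArg₂ (fun a b : ℝ => a * b) (key _ _ _) (key _ _ _)))))
    simp only [hθ, hκ, Fintype.card_eq_nat_card]
  have p1 := ZN_pos φ β N
  have p2 := ZN_pos φ (β + 1) N
  have p3 := ZN_pos φ (β + 2) N
  have hlogZ := Real.log_le_log (pow_pos p2 2) hZ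
  rw [Real.log_mul (pow_pos hθ0 _).ne' (mul_pos p1 p3).ne', Real.log_mul p1.ne' p3.ne',
    Real.log_pow, Real.log_pow] at hlogZ
  push_cast at hlogZ
  have hNpos : (0 : ℝ) < N := by exact_mod_cast Nat.pos_of_ne_zero (NeZero.ne N)
  have hNr : (N : ℝ) = l * M := by rw [hM]; push_cast; ring
  have hMpos : (0 : ℝ) < M := by
    have : M ≠ 0 := by rintro rfl; exact NeZero.ne N (by rw [hM]; ring)
    exact_mod_cast Nat.pos_of_ne_zero this
  have h1 := mul_le_mul_of_nonneg_left hlogZ (show 0 ≤ ((N : ℝ) ^ d)⁻¹ by positivity)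
  have h2 : ((N : ℝ) ^ d)⁻¹ * ((M : ℝ) ^ d * Real.log θ) = Real.log θ / (l : ℝ) ^ d := by
    rw [hNr, mul_pow]
    field_simp
  unfold PN
  rw [mul_add, h2] at h1
  rw [neg_div]
  linarith

theorem NT_final [Nonempty A] (hd : 1 ≤ d) (φ : Cfg d A → ℝ) (hφ : Continuous φ) (hs : SumVar d φ)
    (R : ℕ) (x y : Cfg d A) (hxy : ∀ m, R < supNorm m → x m = y m) (hD : 0 < relE φ x y)
    (β : ℝ) (hβ : 0 < β) (h1 : ES φ β = ES φ (β + 1)) (h2 : ES φ β = ES φ (β + 2)) : False := by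
  obtain ⟨δ, hδ, h⟩ := NT_main hd φ hφ hs R x y hxy hD β hβ
  obtain ⟨μ, hμ⟩ := ES_nonempty hd φ hφ hs β
  have e1 := hμ.2.2
  have e2 := (h1 ▸ hμ : μ ∈ ES φ (β + 1)).2.2
  have e3 := (h2 ▸ hμ : μ ∈ ES φ (β + 2)).2.2
  have hδ8 : 0 < δ / 8 := by linarith
  obtain ⟨j, a1, a2, a3, a4⟩ := (h.and ((PN_le_pressure hd φ hφ hs β _ hδ8).and
    ((PN_le_pressure hd φ hφ hs (β + 2) _ hδ8).and
      (pressure_le_PN hd φ hφ hs (β + 1) _ hδ8)))).exists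
  rw [← e1] at a2
  rw [← e3] at a3
  rw [← e2] at a4
  linarith

end Nontriv

/-- **Theorem B.** If `Σ_{n ≥ 1} n^{d-1} var_n φ < ∞`, then the continuous
potential `φ` cannot have a freezing phase transition. -/
theorem statement1 (d : ℕ) (hd : 1 ≤ d) (A : Type) [Fintype A] [TopologicalSpace A]
    [DiscreteTopology A] [MeasurableSpace A] [BorelSpace A]
    (φ : Cfg d A → ℝ) (hφ : Continuous φ)
    (hsum : Summable fun n : ℕ => ((n + 1 : ℕ) : ℝ) ^ (d - 1) * varPot φ (n + 1)) :
    ¬ ∃ βc : ℝ, FreezingPT φ βc := by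
  rintro ⟨βc, hF1, hF2⟩
  have hs : SumVar d φ := hsum
  by_cases hA : Nonempty A
  · by_cases H : TrivialPot φ
    · exact hF2 (βc - 1) (βc + 1) (by linarith) (by linarith) (triv_ES hd φ hφ hs H _ _)
    · unfold TrivialPot at H
      push Not at H
      obtain ⟨R, x, y, hxy, hne⟩ := H
      have hβ0 : 0 < max βc 0 + 1 := by
        have := le_max_right βc 0
        linarith
      have hβc : βc < max βc 0 + 1 := by
        have := le_max_left βc 0
        linarith
      have h1 := hF1 (max βc 0 + 1) (max βc 0 + 1 + 1) hβc (by linarith)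
      have h2 := hF1 (max βc 0 + 1) (max βc 0 + 1 + 2) hβc (by linarith)
      rcases lt_or_gt_of_ne hne with h | h
      · refine NT_final hd φ hφ hs R y x (fun m hm => (hxy m hm).symm) ?_ _ hβ0 h1 h2
        have : relE φ y x = - relE φ x y := by
          unfold relE
          rw [← tsum_neg]
          exact tsum_congr fun k => by ring
        rw [this]
        linarith
      · exact NT_final hd φ hφ hs R x y hxy h _ hβ0 h1 h2
  · have hE : ∀ β, ES φ β = ∅ := by
      intro β
      refine Set.eq_empty_of_forall_notMem fun μ hμ => ?_
      have hp : IsProbabilityMeasure μ := hμ.1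
      obtain ⟨x⟩ := nonempty_of_isProbabilityMeasure μ
      exact hA ⟨x 0⟩
    exact hF2 (βc - 1) (βc + 1) (by linarith) (by linarith) (by rw [hE, hE])

end Freezing
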